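/- Let f be an orientation-preserving homeomorphism of ℝ² satisfying (P1) and (P2) and such that Fix(f) is not compact. Then for every finite Borel measure μ on ℝ² invariant under f and every point z' ∈ Fix(f), the rotation number ρ_{z'}(z) is defined for μ-almost every point z of Rec⁺(f) ∖ {z'}. -/

import Mathlib

open MeasureTheory Filter Topology Set Metric

noncomputable section

attribute [local instance] Classical.propDecidable

/-- An isotopy (within homeomorphisms of `X`) from the identity to `f`,
parametrised by `t ∈ [0,1]` (the values for `t ∉ [0,1]` are irrelevant). -/
structure HIsotopy {X : Type*} [TopologicalSpace X] (f : X ≃ₜ X) where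
  F : ℝ → X ≃ₜ X
  cont : Continuous fun p : ℝ × X => F p.1 p.2
  cont_symm : Continuous fun p : ℝ × X => (F p.1).symm p.2
  zero : F 0 = Homeomorph.refl X
  one : F 1 = f

/-- The set of fixed points of a map. -/
def FixPts {X : Type*} (g : X → X) : Set X := {z | g z = z}

/-- The set of positively recurrent points of `f`. -/
def RecPlus (f : ℂ ≃ₜ ℂ) : Set ℂ :=
  {z | ∃ n : ℕ → ℕ, StrictMono n ∧ Tendsto (fun k => (⇑f)^[n k] z) atTop (𝓝 z)}

/-- The total angular variation (number of turns around the origin, i.e. the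
integral of the polar-angle form `dθ`) of a continuous path `[0,1] → ℂ ∖ {0}`,
defined via a continuous lift of the argument (junk value otherwise). -/
def angVar (γ : ℝ → ℂ) : ℝ :=
  if h : ∃ θ : ℝ → ℝ, ContinuousOn θ (Set.Icc 0 1) ∧
      ∀ t ∈ Set.Icc (0 : ℝ) 1, γ t = (‖γ t‖ : ℂ) * Complex.exp ((θ t : ℂ) * Complex.I)
  then (h.choose 1 - h.choose 0) / (2 * Real.pi)
  else 0

/-- `Enlace_I(z,z')`: the integral of `dθ` along `t ↦ f_t(z) - f_t(z')`. -/
def Enlace {f : ℂ ≃ₜ ℂ} (I : HIsotopy f) (z z' : ℂ) : ℝ :=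
  angVar fun t => I.F t z - I.F t z'

/-- `Tourne_I(z)`: the integral of `dθ` along `t ↦ f_t(z)`. -/
def Tourne {f : ℂ ≃ₜ ℂ} (I : HIsotopy f) (z : ℂ) : ℝ :=
  angVar fun t => I.F t z

/-- Property (P1): `Enlace_I` is bounded on pairs of distinct fixed points. -/
def P1 {f : ℂ ≃ₜ ℂ} (I : HIsotopy f) : Prop :=
  ∃ M : ℝ, ∀ z ∈ FixPts ⇑f, ∀ z' ∈ FixPts ⇑f, z ≠ z' → |Enlace I z z'| ≤ M

/-- Property (P2): `Tourne_I` is constant on the fixed points in a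
neighbourhood of infinity (i.e. outside some compact set). -/
def P2 {f : ℂ ≃ₜ ℂ} (I : HIsotopy f) : Prop :=
  ∃ K : Set ℂ, IsCompact K ∧
    ∀ z ∈ FixPts ⇑f \ K, ∀ z' ∈ FixPts ⇑f \ K, Tourne I z = Tourne I z'

/-- An isotopy is adapted if `Tourne_I` vanishes on the fixed points in a
neighbourhood of infinity. -/
def Adapted {f : ℂ ≃ₜ ℂ} (I : HIsotopy f) : Prop :=
  ∃ K : Set ℂ, IsCompact K ∧ ∀ z ∈ FixPts ⇑f \ K, Tourne I z = 0

/-- The orbit of `z` has rotation number `ρ` around `z'` (with respect to the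
isotopy `I`): along every strictly increasing sequence of integers `(n k)` with
`f^[n k] z → z`, the Birkhoff averages of `Enlace I · z'` converge to `ρ`. -/
def HasRot {f : ℂ ≃ₜ ℂ} (I : HIsotopy f) (z' z : ℂ) (ρ : ℝ) : Prop :=
  ∀ n : ℕ → ℕ, StrictMono n → Tendsto (fun k => (⇑f)^[n k] z) atTop (𝓝 z) →
    Tendsto (fun k => (∑ r ∈ Finset.range (n k), Enlace I ((⇑f)^[r] z) z') / (n k : ℝ))
      atTop (𝓝 ρ)

/-- The rotation number `ρ_{z'}(z)` as a function (junk value `0` if it is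
not defined). -/
def rho {f : ℂ ≃ₜ ℂ} (I : HIsotopy f) (z' z : ℂ) : ℝ :=
  if h : ∃ ρ : ℝ, HasRot I z' z ρ then h.choose else 0

/-- A free disc for `f`: an open set homeomorphic to the plane and disjoint
from its image. -/
def FreeDisc (f : ℂ ≃ₜ ℂ) (U : Set ℂ) : Prop :=
  IsOpen U ∧ Nonempty (U ≃ₜ ℂ) ∧ Disjoint (⇑f '' U) U

/-- The first return time `τ_U(z)` to `U` (junk value `0` if the orbit never
returns). -/
def retTime (f : ℂ ≃ₜ ℂ) (U : Set ℂ) (z : ℂ) : ℕ :=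
  sInf {n : ℕ | 0 < n ∧ (⇑f)^[n] z ∈ U}

/-- `γ` is a path in `U` from `x` to `y` (parametrised by `[0,1]`). -/
def IsPathIn (U : Set ℂ) (x y : ℂ) (γ : ℝ → ℂ) : Prop :=
  ContinuousOn γ (Set.Icc 0 1) ∧ (∀ t ∈ Set.Icc (0 : ℝ) 1, γ t ∈ U) ∧ γ 0 = x ∧ γ 1 = y

/-- `α_{U,z'}(z) = Σ_{0 ≤ ℓ < τ_U(z)} Enlace_I(f^ℓ(z),z') + ∫_{γ_{U,z} - z'} dθ`,
where `γ_{U,z}` is a path in `U` joining the first return `F_U(z)` to `z`. -/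
def alphaU {f : ℂ ≃ₜ ℂ} (I : HIsotopy f) (U : Set ℂ) (z' z : ℂ) : ℝ :=
  (∑ ℓ ∈ Finset.range (retTime f U z), Enlace I ((⇑f)^[ℓ] z) z') +
    if h : ∃ γ : ℝ → ℂ, IsPathIn U ((⇑f)^[retTime f U z] z) z γ
    then angVar fun t => h.choose t - z' else 0

/-- `α̂_{U,R}(z) = sup { |α_{U,z'}(z)| : z' ∈ Fix(f), ‖z'‖ ≥ R }`. -/
def alphaHat {f : ℂ ≃ₜ ℂ} (I : HIsotopy f) (U : Set ℂ) (R : ℝ) (z : ℂ) : ℝ :=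
  sSup {a : ℝ | ∃ z' ∈ FixPts ⇑f, R ≤ ‖z'‖ ∧ a = |alphaU I U z' z|}

/-- The (closed) support of a measure. -/
def measSupport {X : Type*} [TopologicalSpace X] {m : MeasurableSpace X}
    (μ : Measure X) : Set X :=
  {x | ∀ U : Set X, IsOpen U → x ∈ U → μ U ≠ 0}

/-- The standard unit sphere `S² ⊂ ℝ³`. -/
notation "𝕊²" => Metric.sphere (0 : EuclideanSpace ℝ (Fin 3)) 1

instance : Fact (Module.finrank ℝ (EuclideanSpace ℝ (Fin 3)) = 3) :=
  ⟨finrank_euclideanSpace_fin⟩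

open Manifold in
/-- `g` is a `C¹` diffeomorphism of the standard sphere. -/
def IsC1SphereDiffeo (g : 𝕊² → 𝕊²) : Prop :=
  Function.Bijective g ∧ ContMDiff (𝓡 2) (𝓡 2) 1 g ∧
    ∃ g' : 𝕊² → 𝕊², Function.LeftInverse g' g ∧ Function.RightInverse g' g ∧
      ContMDiff (𝓡 2) (𝓡 2) 1 g'

/-- `f` extends to a `C¹` diffeomorphism of `S² = ℝ² ⊔ {∞}` for some smooth
structure on `S²`: transporting the extension of `f` to the one-point
compactification through some homeomorphism with the standard sphere yields a
`C¹` diffeomorphism. -/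
def ExtendsToC1SphereDiffeo (f : ℂ ≃ₜ ℂ) : Prop :=
  ∃ φ : OnePoint ℂ ≃ₜ 𝕊², IsC1SphereDiffeo fun x => φ (OnePoint.map (⇑f) (φ.symm x))

/-- The commutator loop `t ↦ [f₁^t, f₂^t] = f₁^t ∘ f₂^t ∘ (f₁^t)⁻¹ ∘ (f₂^t)⁻¹`. -/
def commLoop {X : Type*} [TopologicalSpace X] {f₁ f₂ : X ≃ₜ X}
    (I₁ : HIsotopy f₁) (I₂ : HIsotopy f₂) (t : ℝ) : X ≃ₜ X :=
  (I₂.F t).symm.trans ((I₁.F t).symm.trans ((I₂.F t).trans (I₁.F t)))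

/-- The invariant `W(f₁,f₂)` vanishes: for isotopies from the identity to
`f₁`, `f₂`, the commutator loop is null-homotopic (rel basepoint) in the group
of homeomorphisms. -/
def WVanishes {X : Type*} [TopologicalSpace X] (f₁ f₂ : X ≃ₜ X) : Prop :=
  ∃ (I₁ : HIsotopy f₁) (I₂ : HIsotopy f₂) (H : ℝ → ℝ → X ≃ₜ X),
    Continuous (fun p : (ℝ × ℝ) × X => H p.1.1 p.1.2 p.2) ∧
    Continuous (fun p : (ℝ × ℝ) × X => (H p.1.1 p.1.2).symm p.2) ∧
    (∀ t, H 0 t = commLoop I₁ I₂ t) ∧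
    (∀ t, H 1 t = Homeomorph.refl X) ∧
    (∀ s, H s 0 = Homeomorph.refl X) ∧
    (∀ s, H s 1 = Homeomorph.refl X)

/-- The shorter great-circle arc joining `p` to `z` on the unit sphere
(for `z` neither `p` nor its antipode): the points of the sphere which are
nonnegative linear combinations of `p` and `z`. -/
def minorArcS (p z : 𝕊²) : Set 𝕊² :=
  {x | ∃ a b : ℝ, 0 ≤ a ∧ 0 ≤ b ∧
    (x : EuclideanSpace ℝ (Fin 3)) =
      a • (p : EuclideanSpace ℝ (Fin 3)) + b • (z : EuclideanSpace ℝ (Fin 3))}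

/-- The longer great-circle arc joining `p` to `z` on the unit sphere. -/
def majorArcS (p z : 𝕊²) : Set 𝕊² :=
  {x | ∃ a b : ℝ, (a ≤ 0 ∨ b ≤ 0) ∧
    (x : EuclideanSpace ℝ (Fin 3)) =
      a • (p : EuclideanSpace ℝ (Fin 3)) + b • (z : EuclideanSpace ℝ (Fin 3))}

/-!
The isotopy lifts `f` to a homeomorphism `F` of the universal cover `ℂ` of `ℂ ∖ {z'}`, realised by
`w ↦ z' + exp w`. It commutes with the translation by `P = 2πi`, and `Enlace I · z'` is the
imaginary part of the displacement of `F`, divided by `2π`. If `F w = w + k • P`, then `w` covers a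
fixed point of linking number `k`; hence `F - k • P` has no fixed points for large `|k|`, and
Franks' lemma applies to it: if `U` is a small disc which `f` moves off itself, then no two orbit
segments of `F - k • P` from a lift of `U` to its translates go up and down respectively.
Comparing an arbitrary orbit segment with a fixed one, one finds that an orbit of `f` returning to
`U` after time `n` turns `O(n)` times around `z'`.

Although `Enlace I · z'` may be unbounded, its Birkhoff sums at the return times to `U` are
therefore those of a bounded function, obtained by averaging over the segments between consecutive
returns, and Birkhoff's theorem gives their convergence.

`F` preserves the orientation of the plane. As degree theory is not available, Brouwer's theorem
that such a homeomorphism without fixed points has no periodic points is deduced from the existence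
of a logarithm of the slope of `F` symmetric in the two points.
-/

/-! ### Continuous logarithms -/

theorem exists_continuous_log_homotopy {X : Type*} [TopologicalSpace X]
    {H : unitInterval × X → ℂ} (hH : Continuous H) (hne : ∀ p, H p ≠ 0)
    {e : X → ℂ} (he : Continuous e) (hH0 : ∀ x, H (0, x) = Complex.exp (e x)) :
    ∃ l : unitInterval × X → ℂ, Continuous l ∧ (∀ p, Complex.exp (l p) = H p) ∧
      ∀ x, l (0, x) = e x := by
  let H' : C(unitInterval × X, {z : ℂ // z ≠ 0}) := ⟨fun p => ⟨H p, hne p⟩, by fun_prop⟩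
  have hh : ∀ x, H' (0, x) = (⟨_, (e x).exp_ne_zero⟩ : {z : ℂ // z ≠ 0}) :=
    fun x => Subtype.ext (hH0 x)
  have cov := Complex.isCoveringMap_exp
  exact ⟨cov.liftHomotopy H' ⟨e, he⟩ hh, ContinuousMap.continuous _,
    fun p => congrArg Subtype.val (congrFun (cov.liftHomotopy_lifts H' ⟨e, he⟩ hh) p),
    cov.liftHomotopy_zero H' ⟨e, he⟩ hh⟩

theorem eq_of_exp_eq_exp {X : Type*} [TopologicalSpace X] [PreconnectedSpace X] {g₁ g₂ : X → ℂ}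
    (h₁ : Continuous g₁) (h₂ : Continuous g₂)
    (h : ∀ x, Complex.exp (g₁ x) = Complex.exp (g₂ x)) {x : X} (hx : g₁ x = g₂ x) : g₁ = g₂ :=
  Complex.isCoveringMap_exp.eq_of_comp_eq h₁ h₂ (funext fun y => Subtype.ext (h y)) x hx

theorem exists_continuous_log {X : Type*} [TopologicalSpace X] [SimplyConnectedSpace X]
    [LocallyPathConnectedSpace X] {v : X → ℂ} (hv : Continuous v) (hne : ∀ x, v x ≠ 0) :
    ∃ a : X → ℂ, Continuous a ∧ ∀ x, Complex.exp (a x) = v x := by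
  let v' : C(X, {z : ℂ // z ≠ 0}) := ⟨fun x => ⟨v x, hne x⟩, by fun_prop⟩
  obtain ⟨x₀⟩ := (inferInstance : Nonempty X)
  obtain ⟨a, ⟨-, ha⟩, -⟩ := Complex.isCoveringMap_exp.existsUnique_continuousMap_lifts v' x₀
    (Complex.log (v x₀)) (Subtype.ext (Complex.exp_log (hne x₀)))
  exact ⟨a, a.continuous, fun x => congrArg Subtype.val (congrFun ha x)⟩

/-! ### Symmetric logarithms of slopes -/

/-- The slopes of `F` between distinct points have a continuous logarithm that is, like the slope,
symmetric in the two points. For injective `F` this replaces the condition that `F` preserves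
the orientation: unlike that condition, it is defined for all maps and visibly stable under
composition. -/
def HasSymmLogSlope (F : ℂ → ℂ) : Prop :=
  ∃ L : ℂ × ℂ → ℂ, ContinuousOn L {p | p.1 ≠ p.2} ∧ (∀ x y, L (x, y) = L (y, x)) ∧
    ∀ x y, x ≠ y → Complex.exp (L (x, y)) = slope F x y

theorem continuous_slope_subtype {X : Type*} [TopologicalSpace X] {F : X → ℂ → ℂ}
    (hF : Continuous fun p : X × ℂ => F p.1 p.2) :
    Continuous fun q : X × {p : ℂ × ℂ // p.1 ≠ p.2} => slope (F q.1) q.2.1.1 q.2.1.2 := by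
  have h (a : X × {p : ℂ × ℂ // p.1 ≠ p.2} → ℂ) (ha : Continuous a) :
      Continuous fun q => F q.1 (a q) := hF.comp (continuous_fst.prodMk ha)
  simp only [slope_def_field]
  exact ((h _ (by fun_prop)).sub (h _ (by fun_prop))).div (by fun_prop)
    fun q => sub_ne_zero.2 q.2.2.symm

theorem slope_ne_zero_of_injective {F : ℂ → ℂ} (hF : Function.Injective F) {x y : ℂ}
    (h : x ≠ y) : slope F x y ≠ 0 := by
  rw [slope_def_field]
  exact div_ne_zero (sub_ne_zero.2 (hF.ne h.symm)) (sub_ne_zero.2 h.symm)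

theorem hasSymmLogSlope_of_isotopy {l : unitInterval × ℂ → ℂ} (hl : Continuous l)
    (hinj : ∀ t, Function.Injective fun x => l (t, x)) (h0 : ∀ x, l (0, x) = x) :
    HasSymmLogSlope fun x => l (1, x) := by
  let s : unitInterval × {p : ℂ × ℂ // p.1 ≠ p.2} → ℂ :=
    fun q => slope (fun x => l (q.1, x)) q.2.1.1 q.2.1.2
  obtain ⟨m, hm, hexp, hm0⟩ := exists_continuous_log_homotopy (H := s)
    (continuous_slope_subtype (F := fun t x => l (t, x)) hl)
    (fun q => slope_ne_zero_of_injective (hinj q.1) q.2.2)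
    (e := fun _ => 0) continuous_const
    (fun p => by simp [s, h0, slope_def_field, div_self (sub_ne_zero.2 p.2.symm)])
  have hsymm (p : {p : ℂ × ℂ // p.1 ≠ p.2}) :
      (fun t => m (t, p)) = fun t => m (t, ⟨p.1.swap, p.2.symm⟩) := by
    refine eq_of_exp_eq_exp (by fun_prop) (by fun_prop) (fun t => ?_) (x := 0) ?_
    · rw [hexp, hexp]
      exact slope_comm _ _ _
    · rw [hm0, hm0]
  refine ⟨fun p => if h : p.1 ≠ p.2 then m (1, ⟨p, h⟩) else 0, ?_, fun x y => ?_, fun x y h => ?_⟩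
  · rw [continuousOn_iff_continuous_domRestrict]
    refine (hm.comp (Continuous.prodMk_right 1)).congr fun p => ?_
    rw [domRestrict_apply, dif_pos p.2]
    rfl
  · by_cases h : x = y
    · rw [h]
    · simp only [dif_pos h, dif_pos (Ne.symm h)]
      exact congrFun (hsymm ⟨(x, y), h⟩) 1
  · simp only [dif_pos h]
    exact hexp _

theorem injective_id_add_of_lipschitzWith {E : Type*} [NormedAddCommGroup E] {u : E → E}
    {K : NNReal} (hu : LipschitzWith K u) (hK : K < 1) : Function.Injective fun x => x + u x := by
  intro x y hxy
  by_contra hne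
  have hsub : x - y = u y - u x := by
    rw [sub_eq_sub_iff_add_eq_add, add_comm (u y)]
    simpa only [add_comm] using hxy
  have hle := hu.dist_le_mul y x
  rw [dist_eq_norm, ← hsub, ← dist_eq_norm, dist_comm y x] at hle
  exact absurd hle (not_le.2 (mul_lt_of_lt_one_left (dist_pos.2 hne) hK))

theorem hasSymmLogSlope_id_add {u : ℂ → ℂ} {K : NNReal} (hu : LipschitzWith K u) (hK : K < 1) :
    HasSymmLogSlope fun x => x + u x := by
  have hc := hu.continuous
  have := hasSymmLogSlope_of_isotopy (l := fun p => p.2 + (p.1 : ℝ) • u p.2) (by fun_prop)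
    (fun t => injective_id_add_of_lipschitzWith
      (((lipschitzWith_smul (t : ℝ)).comp hu).weaken ?_) hK) (by simp)
  · simpa using this
  · have ht : ‖(t : ℝ)‖₊ ≤ 1 := by
      rw [← NNReal.coe_le_coe]; simpa [abs_of_nonneg t.2.1] using t.2.2
    exact mul_le_of_le_one_left K.2 ht

theorem hasSymmLogSlope_id : HasSymmLogSlope id := by
  simpa using! hasSymmLogSlope_id_add (LipschitzWith.const (0 : ℂ)) one_pos

theorem hasSymmLogSlope_add_const (c : ℂ) : HasSymmLogSlope fun x => x + c :=
  hasSymmLogSlope_id_add (LipschitzWith.const c) one_pos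

namespace HasSymmLogSlope

variable {F G : ℂ → ℂ}

theorem injective (hF : HasSymmLogSlope F) : Function.Injective F := by
  obtain ⟨L, -, -, hL⟩ := hF
  intro x y hxy
  by_contra hne
  exact Complex.exp_ne_zero (L (x, y)) (by rw [hL x y hne, slope_def_field, hxy]; simp)

theorem comp (hG : HasSymmLogSlope G) (hF : HasSymmLogSlope F) (hc : Continuous F) :
    HasSymmLogSlope (G ∘ F) := by
  have hinj := hF.injective
  obtain ⟨L, hLc, hLs, hL⟩ := hF
  obtain ⟨M, hMc, hMs, hM⟩ := hG
  refine ⟨fun p => L p + M (F p.1, F p.2), ?_, fun x y => ?_, fun x y h => ?_⟩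
  · exact hLc.add (hMc.comp (by fun_prop) fun p hp => hinj.ne hp)
  · simp only [hLs x y, hMs (F x)]
  · have hne : F y - F x ≠ 0 := sub_ne_zero.2 (hinj.ne h.symm)
    rw [Complex.exp_add, hL x y h, hM _ _ (hinj.ne h)]
    simp only [slope_def_field, Function.comp_apply]
    field_simp

theorem symm {φ : ℂ ≃ₜ ℂ} (hφ : HasSymmLogSlope φ) : HasSymmLogSlope φ.symm := by
  obtain ⟨L, hLc, hLs, hL⟩ := hφ
  refine ⟨fun p => -L (φ.symm p.1, φ.symm p.2), ?_, fun x y => ?_, fun x y h => ?_⟩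
  · exact (hLc.comp (by fun_prop) fun p hp => φ.symm.injective.ne hp).neg
  · simp only [hLs (φ.symm x)]
  · rw [Complex.exp_neg, hL _ _ (φ.symm.injective.ne h)]
    simp only [slope_def_field, Homeomorph.apply_symm_apply, inv_div]

/-- If `F (F x) = x` then a logarithm `a` of the displacement `F - id` changes by the same amount
along `(x, F x)` as along `(F x, x)`, because the slope at `(F x, x)` is symmetric; hence `F`
displaces `x` and `F x` by the same vector. -/
theorem apply_apply_ne (hF : HasSymmLogSlope F) (hc : Continuous F) (hfree : ∀ x, F x ≠ x)
    (x : ℂ) : F (F x) ≠ x := by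
  intro hx
  obtain ⟨L, hLc, hLs, hL⟩ := hF
  obtain ⟨a, ha, hexp⟩ := exists_continuous_log (v := fun x => F x - x) (by fun_prop)
    fun x => sub_ne_zero.2 (hfree x)
  have hquot (y : ℂ) : Complex.exp (L (y, F y)) = Complex.exp (a (F y) - a y) := by
    rw [Complex.exp_sub, hL _ _ (hfree y).symm, slope_def_field, hexp, hexp]
  have hdiff : (fun y => L (y, F y) - L (x, F x)) = fun y => a (F y) - a y - (a (F x) - a x) := by
    refine eq_of_exp_eq_exp ?_ (by fun_prop) (fun y => ?_) (x := x) (by simp)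
    · exact (hLc.comp_continuous (by fun_prop) fun y => (hfree y).symm).sub continuous_const
    · rw [Complex.exp_sub, Complex.exp_sub _ (_ - _), hquot, hquot]
  have hax : a (F x) = a x := by
    have h := congrFun hdiff (F x)
    simp only [hx, hLs (F x) x, sub_self] at h
    linear_combination h / 2
  have hd : F (F x) - F x = F x - x := by rw [← hexp, ← hexp x, hax]
  rw [hx] at hd
  exact hfree x (by linear_combination -hd / 2)

end HasSymmLogSlope

/-! ### Pushing points inside connected sets -/

theorem exists_homeomorph_id_add {E : Type*} [NormedAddCommGroup E] [NormedSpace ℝ E]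
    [CompleteSpace E] {u : E → E} {K : NNReal} (hu : LipschitzWith K u) (hK : K < 1) :
    ∃ φ : E ≃ₜ E, ∀ x, φ x = x + u x := by
  have happ : ApproximatesLinearOn (fun x => x + u x)
      ((ContinuousLinearEquiv.refl ℝ E : E ≃L[ℝ] E) : E →L[ℝ] E) univ K := by
    rw [ApproximatesLinearOn.approximatesLinearOn_iff_lipschitzOnWith, lipschitzOnWith_univ]
    convert hu
    ext x
    simp
  refine ⟨happ.toHomeomorph _ ?_, fun x => rfl⟩
  rcases subsingleton_or_nontrivial E with hE | hE
  · exact Or.inl hE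
  · refine Or.inr (hK.trans_le ?_)
    have hid : ‖((ContinuousLinearEquiv.refl ℝ E).symm : E →L[ℝ] E)‖₊ = 1 :=
      NNReal.eq ContinuousLinearMap.norm_id
    rw [hid, inv_one]

theorem mapsTo_of_injective_of_eqOn_compl {X : Type*} {φ : X → X} (hφ : Function.Injective φ)
    {N : Set X} (hN : ∀ x ∉ N, φ x = x) : MapsTo φ N N := by
  intro x hx
  by_contra h
  exact h ((hφ (hN _ h)).symm ▸ hx)

/-- `a` can be moved to `b` by a homeomorphism of the plane that is the identity off `N`. -/
def Pushes (N : Set ℂ) (a b : ℂ) : Prop :=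
  ∃ φ : ℂ ≃ₜ ℂ, HasSymmLogSlope φ ∧ φ a = b ∧ ∀ x ∉ N, φ x = x

namespace Pushes

variable {N M : Set ℂ} {a b c : ℂ}

theorem refl (N : Set ℂ) (a : ℂ) : Pushes N a a :=
  ⟨Homeomorph.refl ℂ, hasSymmLogSlope_id, rfl, fun _ _ => rfl⟩

theorem symm (h : Pushes N a b) : Pushes N b a := by
  obtain ⟨φ, hφ, rfl, hN⟩ := h
  exact ⟨φ.symm, hφ.symm, φ.symm_apply_apply a, fun x hx => φ.symm_apply_eq.2 (hN x hx).symm⟩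

theorem trans (hab : Pushes N a b) (hbc : Pushes N b c) : Pushes N a c := by
  obtain ⟨φ, hφ, rfl, hφN⟩ := hab
  obtain ⟨ψ, hψ, rfl, hψN⟩ := hbc
  refine ⟨φ.trans ψ, hψ.comp hφ φ.continuous, rfl, fun x hx => ?_⟩
  rw [Homeomorph.trans_apply, hφN x hx, hψN x hx]

theorem mono (h : Pushes N a b) (hNM : N ⊆ M) : Pushes M a b := by
  obtain ⟨φ, hφ, hab, hN⟩ := h
  exact ⟨φ, hφ, hab, fun x hx => hN x fun hx' => hx (hNM hx')⟩

end Pushes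

theorem pushes_ball {a b : ℂ} {r : ℝ} (hb : dist b a < r) : Pushes (ball a r) a b := by
  have hr : 0 < r := dist_nonneg.trans_lt hb
  let v : ℂ := r⁻¹ • (b - a)
  let u : ℂ → ℂ := fun x => max 0 (r - dist x a) • v
  have hv : ‖v‖₊ < 1 := by
    rw [← NNReal.coe_lt_coe, coe_nnnorm, norm_smul, norm_inv, Real.norm_of_nonneg hr.le,
      ← dist_eq_norm, NNReal.coe_one, inv_mul_lt_one₀ hr]
    exact hb
  have hu : LipschitzWith ‖v‖₊ u := by
    refine LipschitzWith.of_dist_le_mul fun x y => ?_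
    rw [dist_eq_norm, ← sub_smul, norm_smul, ← dist_eq_norm, mul_comm, coe_nnnorm]
    gcongr
    simpa using ((LipschitzWith.const r).sub (LipschitzWith.dist_left a)).const_max 0
      |>.dist_le_mul x y
  obtain ⟨φ, hφ⟩ := exists_homeomorph_id_add hu hv
  refine ⟨φ, (funext hφ : ⇑φ = _) ▸ hasSymmLogSlope_id_add hu hv, ?_, fun x hx => ?_⟩
  · simp [hφ, u, v, hr.le, hr.ne']
  · rw [mem_ball, not_lt] at hx
    simp [hφ, u, hx]

theorem pushes_of_isPreconnected {K W : Set ℂ} (hK : IsPreconnected K) (hW : IsOpen W)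
    (hKW : K ⊆ W) {a b : ℂ} (ha : a ∈ K) (hb : b ∈ K) : Pushes W a b := by
  refine hK.induction₂ (Pushes W) (fun x hx => ?_) (fun _ _ _ _ _ _ => Pushes.trans)
    (fun _ _ _ _ => Pushes.symm) ha hb
  obtain ⟨r, hr, hrW⟩ := Metric.isOpen_iff.1 hW x (hKW hx)
  exact nhdsWithin_le_nhds <| mem_of_superset (ball_mem_nhds x hr) fun _ hy =>
    (pushes_ball hy).mono hrW

/-! ### Brouwer homeomorphisms -/

/-- A Brouwer homeomorphism: it has no fixed point and preserves the orientation, in the form of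
`HasSymmLogSlope`. -/
structure IsBrouwer (F : ℂ ≃ₜ ℂ) : Prop where
  hasSymmLogSlope : HasSymmLogSlope F
  apply_ne (x : ℂ) : F x ≠ x

theorem exists_isOpen_mapsTo_compl {X : Type*} [TopologicalSpace X] [T2Space X] {F : X → X}
    (hF : Continuous F) {K : Set X} (hK : IsCompact K) (hfree : MapsTo F K Kᶜ) :
    ∃ W, IsOpen W ∧ K ⊆ W ∧ MapsTo F W Wᶜ := by
  obtain ⟨A, B, hA, hB, hKA, hKB, hAB⟩ := SeparatedNhds.of_isCompact_isCompact hK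
    (hK.image hF) (disjoint_right.2 (forall_mem_image.2 hfree))
  refine ⟨A ∩ F ⁻¹' B, hA.inter (hB.preimage hF), fun x hx => ⟨hKA hx, hKB ⟨x, hx, rfl⟩⟩, ?_⟩
  exact fun x hx hFx => hAB.le_bot ⟨hFx.1, hx.2⟩

theorem IsBrouwer.exists_push {F : ℂ ≃ₜ ℂ} (hF : IsBrouwer F) {K S : Set ℂ} (hK : IsCompact K)
    (hKc : IsPreconnected K) (hfree : MapsTo F K Kᶜ) (hS : IsClosed S) (hKS : Disjoint K S)
    {a b : ℂ} (ha : a ∈ K) (hb : b ∈ K) :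
    ∃ G : ℂ ≃ₜ ℂ, IsBrouwer G ∧ (∀ w, F w ∈ S → G w = F w) ∧ ∀ w, F w = a → G w = b := by
  obtain ⟨W, hW, hKW, hWfree⟩ := exists_isOpen_mapsTo_compl F.continuous hK hfree
  obtain ⟨φ, hφ, hab, hφW⟩ := pushes_of_isPreconnected hKc (hW.sdiff hS)
    (subset_sdiff.2 ⟨hKW, hKS⟩) ha hb
  have hmaps := mapsTo_of_injective_of_eqOn_compl φ.injective hφW
  refine ⟨F.trans φ, ⟨hφ.comp hF.hasSymmLogSlope F.continuous, fun x hx => ?_⟩,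
    fun w hw => hφW _ fun h => h.2 hw, fun w hw => (congrArg φ hw).trans hab⟩
  rw [Homeomorph.trans_apply] at hx
  by_cases h : F x ∈ W \ S
  · exact hWfree (hx ▸ hmaps h).1 h.1
  · exact hF.apply_ne x (hφW _ h ▸ hx)

theorem iterate_eq_of_forall_lt {X : Type*} {g : X → X} {u : ℕ → X} {n : ℕ}
    (h : ∀ i < n, g (u i) = u (i + 1)) : g^[n] (u 0) = u n := by
  induction n with
  | zero => rfl
  | succ n ih =>
    rw [Function.iterate_succ_apply', ih fun i hi => h i (by omega), h n n.lt_succ_self]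

theorem isClosed_image_iterate (F : ℂ → ℂ) (x : ℂ) (m n : ℕ) :
    IsClosed ((fun l => F^[l] x) '' Ico m n) :=
  ((finite_Ico m n).image _).isClosed

/-- Pushing the first return to `K` back to the starting point inside a free neighbourhood of `K`
closes the orbit without creating fixed points. -/
theorem IsBrouwer.exists_isPeriodicPt_of_return {F : ℂ ≃ₜ ℂ} (hF : IsBrouwer F) {K : Set ℂ}
    (hK : IsCompact K) (hKc : IsPreconnected K) (hfree : MapsTo F K Kᶜ) {y : ℂ} (hy : y ∈ K)
    {j : ℕ} (hj : 0 < j) (hjy : F^[j] y ∈ K) :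
    ∃ G : ℂ ≃ₜ ℂ, IsBrouwer G ∧ ∃ i, 0 < i ∧ i ≤ j ∧ Function.IsPeriodicPt G i y := by
  have hret : ∃ i, 0 < i ∧ F^[i] y ∈ K := ⟨j, hj, hjy⟩
  obtain ⟨i, ⟨hi, hiK⟩, hmin⟩ := Nat.findX hret
  have hij : i ≤ j := not_lt.1 fun h => hmin j h ⟨hj, hjy⟩
  have hdisj : Disjoint K ((fun l => F^[l] y) '' Ico 1 i) := by
    refine disjoint_right.2 ?_
    rintro _ ⟨l, hl, rfl⟩ hlK
    exact hmin l hl.2 ⟨hl.1, hlK⟩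
  obtain ⟨G, hG, hGS, hGy⟩ := hF.exists_push hK hKc hfree (isClosed_image_iterate F y 1 i) hdisj
    hiK hy
  refine ⟨G, hG, i, hi, hij, ?_⟩
  obtain ⟨n, rfl⟩ : ∃ n, i = n + 1 := ⟨i - 1, by omega⟩
  have horb : G^[n] y = F^[n] y := by
    refine iterate_eq_of_forall_lt (u := fun l => F^[l] y) fun l hl => ?_
    rw [Function.iterate_succ_apply']
    exact hGS _ ⟨l + 1, ⟨by omega, by omega⟩, Function.iterate_succ_apply' ..⟩
  rw [Function.IsPeriodicPt, Function.IsFixedPt, Function.iterate_succ_apply', horb]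
  exact hGy _ (Function.iterate_succ_apply' ..).symm

/-! ### Brouwer's lemma on periodic points -/

/-- The closed ball of centre `x` and radius `r` meets its image under `F` only along the boundary
spheres of both. -/
def IsFreeBall {E : Type*} [PseudoMetricSpace E] (F : E → E) (x : E) (r : ℝ) : Prop :=
  ∀ a ∈ closedBall x r, F a ∈ closedBall x r → dist a x = r ∧ dist (F a) x = r

theorem exists_maximal_isFreeBall {E : Type*} [NormedAddCommGroup E] [NormedSpace ℝ E]
    [ProperSpace E] (F : E ≃ₜ E) {x : E} (hx : F x ≠ x) :
    ∃ r > 0, (∃ p ∈ closedBall x r, F p ∈ closedBall x r) ∧ IsFreeBall F x r := by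
  obtain ⟨p, hp⟩ : ∃ p, ∀ a, max (dist p x) (dist (F p) x) ≤ max (dist a x) (dist (F a) x) :=
    Continuous.exists_forall_le (by fun_prop)
      (tendsto_atTop_mono (fun a => le_max_left _ _) (tendsto_dist_right_cocompact_atTop x))
  set r := max (dist p x) (dist (F p) x)
  have hr : 0 < r := by
    by_contra h
    have hpx : p = x := dist_le_zero.1 ((le_max_left _ _).trans (not_lt.1 h))
    have hFp : F p = x := dist_le_zero.1 ((le_max_right _ _).trans (not_lt.1 h))
    exact hx (hpx ▸ hFp)
  have hopen (b : E) (hb : b ∈ ball x r) : F b ∉ ball x r := fun hFb =>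
    (hp b).not_gt (max_lt hb hFb)
  have hcl : closure (ball x r) = closedBall x r := closure_ball x hr.ne'
  refine ⟨r, hr, ⟨p, le_max_left (dist p x) _, le_max_right _ (dist (F p) x)⟩,
    fun a ha hFa => ⟨?_, ?_⟩⟩
  · refine ha.antisymm (not_lt.1 fun hlt => ?_)
    obtain ⟨_, ⟨b, hb, rfl⟩, hFb⟩ := mem_closure_iff.1 (hcl.symm ▸ hFa) _
      (F.isOpenMap _ isOpen_ball) (mem_image_of_mem F hlt)
    exact hopen b hb hFb
  · refine hFa.antisymm (not_lt.1 fun hlt => ?_)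
    obtain ⟨b, hFb, hb⟩ := mem_closure_iff.1 (hcl.symm ▸ ha) _
      (isOpen_ball.preimage F.continuous) hlt
    exact hopen b hb hFb

section Segment

variable {E : Type*} [NormedAddCommGroup E] [NormedSpace ℝ E]

theorem eq_of_mem_segment_of_dist_le {x s a : E} (ha : a ∈ segment ℝ x s)
    (h : dist s x ≤ dist a x) : a = s := by
  have hadd := dist_add_dist_of_mem_segment ha
  rw [dist_comm x a, dist_comm x s] at hadd
  exact dist_le_zero.1 (by linarith)

theorem isCompact_segment (x y : E) : IsCompact (segment ℝ x y) := by
  rw [segment_eq_image_lineMap]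
  exact isCompact_Icc.image AffineMap.lineMap_continuous

theorem isPreconnected_segment_union (x s t : E) :
    IsPreconnected (segment ℝ x s ∪ segment ℝ x t) :=
  (convex_segment x s).isPreconnected.union x (left_mem_segment ℝ x s) (left_mem_segment ℝ x t)
    (convex_segment x t).isPreconnected

theorem IsFreeBall.mapsTo_segment_union {F : E → E} {x : E} {r : ℝ} (hfree : IsFreeBall F x r)
    (hF : ∀ a, F a ≠ a) {s t : E} (hs : s ∈ closedBall x r) (ht : t ∈ closedBall x r)
    (hst : dist s x = r → dist t x = r → F s ≠ t ∧ F t ≠ s) :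
    MapsTo F (segment ℝ x s ∪ segment ℝ x t) (segment ℝ x s ∪ segment ℝ x t)ᶜ := by
  have hx : x ∈ closedBall x r := mem_closedBall_self (dist_nonneg.trans hs)
  have hsub : segment ℝ x s ∪ segment ℝ x t ⊆ closedBall x r := union_subset
    ((convex_closedBall x r).segment_subset hx hs) ((convex_closedBall x r).segment_subset hx ht)
  have hend (a : E) (ha : a ∈ segment ℝ x s ∪ segment ℝ x t) (har : dist a x = r) :
      a = s ∨ a = t :=
    ha.imp (fun h => eq_of_mem_segment_of_dist_le h (har ▸ hs))
      fun h => eq_of_mem_segment_of_dist_le h (har ▸ ht)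
  intro a ha hFa
  obtain ⟨har, hFar⟩ := hfree a (hsub ha) (hsub hFa)
  rcases hend a ha har with rfl | rfl <;> rcases hend _ hFa hFar with h | h
  · exact hF _ h
  · exact (hst har (h ▸ hFar)).1 h
  · exact (hst (h ▸ hFar) har).2 h
  · exact hF _ h

theorem IsFreeBall.mapsTo_segment {F : E → E} {x : E} {r : ℝ} (hfree : IsFreeBall F x r)
    (hF : ∀ a, F a ≠ a) {s : E} (hs : s ∈ closedBall x r) :
    MapsTo F (segment ℝ x s) (segment ℝ x s)ᶜ := by
  simpa using hfree.mapsTo_segment_union hF hs hs fun _ _ => ⟨hF s, hF s⟩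

end Segment

namespace IsBrouwer

variable {F : ℂ ≃ₜ ℂ} {x p : ℂ} {m : ℕ}

theorem exists_push_push (hF : IsBrouwer F) {K₁ K₂ S : Set ℂ} (hK₁ : IsCompact K₁)
    (hK₂ : IsCompact K₂) (hKc₁ : IsPreconnected K₁) (hKc₂ : IsPreconnected K₂)
    (hfree₁ : MapsTo F K₁ K₁ᶜ) (hfree₂ : MapsTo F K₂ K₂ᶜ) (hfree₂₁ : MapsTo F K₂ K₁ᶜ)
    (hS : IsClosed S) (hKS₁ : Disjoint K₁ S) (hKS₂ : Disjoint K₂ S) {a b c : ℂ}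
    (ha : a ∈ K₁) (hb₁ : b ∈ K₁) (hb₂ : b ∈ K₂) (hc : c ∈ K₂) :
    ∃ G : ℂ ≃ₜ ℂ, IsBrouwer G ∧ (∀ w, F w ∈ S → G w = F w) ∧ ∀ w, F w = a → G w = c := by
  obtain ⟨H, hH, hHS, hHa⟩ := hF.exists_push hK₁ hKc₁ hfree₁
    (hS.union (hK₂.image F.continuous).isClosed)
    (disjoint_union_right.2 ⟨hKS₁, disjoint_right.2 (forall_mem_image.2 hfree₂₁)⟩) ha hb₁
  have hHfree : MapsTo H K₂ K₂ᶜ := fun w hw =>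
    (hHS w (Or.inr (mem_image_of_mem F hw))).symm ▸ hfree₂ hw
  obtain ⟨G, hG, hGS, hGb⟩ := hH.exists_push hK₂ hKc₂ hHfree hS hKS₂ hb₂ hc
  refine ⟨G, hG, fun w hw => ?_, fun w hw => hGb w (hHa w hw)⟩
  have hHF := hHS w (Or.inl hw)
  rw [hGS w (hHF ▸ hw), hHF]

/-- Pushing `x` to `F p` along `[x, F p]` and then `F p` to `F x` along `F [x, p]` lets the orbit of
`F x` skip `x`. -/
theorem exists_isPeriodicPt_pred (hF : IsBrouwer F) (hx : Function.IsPeriodicPt F (m + 2) x)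
    (hfree₁ : MapsTo F (segment ℝ x (F p)) (segment ℝ x (F p))ᶜ)
    (hfree₂ : MapsTo F (segment ℝ x p) (segment ℝ x p)ᶜ)
    (hfree₂₁ : MapsTo F (F '' segment ℝ x p) (segment ℝ x (F p))ᶜ)
    (hret₁ : ∀ l, 0 < l → l < m + 2 → F^[l] x ∉ segment ℝ x (F p))
    (hret₂ : ∀ l, 0 < l → l < m + 2 → F^[l] x ∉ segment ℝ x p) :
    ∃ G : ℂ ≃ₜ ℂ, IsBrouwer G ∧ Function.IsPeriodicPt G (m + 1) (F x) := by
  let S : Set ℂ := (fun l => F^[l] x) '' Ico 2 (m + 2)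
  have hS₁ : Disjoint (segment ℝ x (F p)) S := by
    refine disjoint_right.2 ?_
    rintro _ ⟨l, ⟨hl, hlm⟩, rfl⟩
    exact hret₁ l (by omega) hlm
  have hS₂ : Disjoint (F '' segment ℝ x p) S := by
    refine disjoint_right.2 ?_
    rintro _ ⟨l, ⟨hl, hlm⟩, rfl⟩ ⟨a, ha, hal⟩
    obtain ⟨k, rfl⟩ : ∃ k, l = k + 1 := ⟨l - 1, by omega⟩
    have hak : a = F^[k] x := F.injective (hal.trans (Function.iterate_succ_apply' ..))
    exact hret₂ k (by omega) (by omega) (hak ▸ ha)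
  have hfree₂' : MapsTo F (F '' segment ℝ x p) (F '' segment ℝ x p)ᶜ := by
    rintro _ ⟨a, ha, rfl⟩ hFa
    exact hfree₂ ha (F.injective.mem_set_image.1 hFa)
  obtain ⟨G, hG, hGS, hGx⟩ := hF.exists_push_push (isCompact_segment _ _)
    ((isCompact_segment _ _).image F.continuous) (convex_segment _ _).isPreconnected
    ((convex_segment _ _).isPreconnected.image _ F.continuous.continuousOn) hfree₁ hfree₂' hfree₂₁
    (isClosed_image_iterate F x 2 (m + 2)) hS₁ hS₂ (left_mem_segment ℝ _ _)
    (right_mem_segment ℝ _ _) (mem_image_of_mem F (right_mem_segment ℝ _ _))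
    (mem_image_of_mem F (left_mem_segment ℝ _ _))
  have horb : G^[m] (F x) = F^[m + 1] x := by
    refine iterate_eq_of_forall_lt (u := fun l => F^[l + 1] x) fun l hl => ?_
    rw [Function.iterate_succ_apply' F (l + 1)]
    exact hGS _ ⟨l + 2, ⟨by omega, by omega⟩, Function.iterate_succ_apply' ..⟩
  refine ⟨G, hG, ?_⟩
  rw [Function.IsPeriodicPt, Function.IsFixedPt, Function.iterate_succ_apply', horb]
  exact hGx _ ((Function.iterate_succ_apply' F (m + 1) x).symm.trans hx)

theorem exists_isPeriodicPt_lt (hF : IsBrouwer F) (hm : 3 ≤ m)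
    (hx : Function.IsPeriodicPt F m x) :
    ∃ i, 0 < i ∧ i < m ∧ ∃ G : ℂ ≃ₜ ℂ, IsBrouwer G ∧ ∃ y, Function.IsPeriodicPt G i y := by
  by_contra hno
  have hret (K : Set ℂ) (hK : IsCompact K) (hKc : IsPreconnected K) (hfree : MapsTo F K Kᶜ)
      (y : ℂ) (hy : y ∈ K) (j : ℕ) (hj : 0 < j) (hjm : j < m) : F^[j] y ∉ K := by
    intro hjy
    obtain ⟨G, hG, i, hi, hij, hiy⟩ := hF.exists_isPeriodicPt_of_return hK hKc hfree hy hj hjy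
    exact hno ⟨i, hi, by omega, G, hG, y, hiy⟩
  obtain ⟨r, hr, ⟨p, hp, hFp⟩, hball⟩ := exists_maximal_isFreeBall F (hF.apply_ne x)
  have hfree₁ := hball.mapsTo_segment hF.apply_ne hFp
  have hfree₂ := hball.mapsTo_segment hF.apply_ne hp
  have hseg {s : ℂ} (hs : s ∈ closedBall x r) : segment ℝ x s ⊆ closedBall x r :=
    (convex_closedBall x r).segment_subset (mem_closedBall_self hr.le) hs
  have hfree₂₁ : MapsTo F (F '' segment ℝ x p) (segment ℝ x (F p))ᶜ := by
    rintro _ ⟨y, hy, rfl⟩ hFFy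
    refine hret (segment ℝ x y ∪ segment ℝ x (F (F y)))
      ((isCompact_segment _ _).union (isCompact_segment _ _)) (isPreconnected_segment_union _ _ _)
      (hball.mapsTo_segment_union hF.apply_ne (hseg hp hy) (hseg hFp hFFy) fun hyr hFFyr => ?_)
      y (Or.inl (right_mem_segment ℝ _ _)) 2 two_pos hm (Or.inr (right_mem_segment ℝ _ _))
    have hyp : y = p := eq_of_mem_segment_of_dist_le hy (hyr ▸ hp)
    have hFFp : F (F y) = F p := eq_of_mem_segment_of_dist_le hFFy (hFFyr ▸ hFp)
    exact absurd (hyp ▸ hFFp) (hF.apply_ne (F p))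
  obtain ⟨n, rfl⟩ : ∃ n, m = n + 2 := ⟨m - 2, by omega⟩
  obtain ⟨G, hG, hGx⟩ := hF.exists_isPeriodicPt_pred hx hfree₁ hfree₂ hfree₂₁
    (hret _ (isCompact_segment _ _) (convex_segment _ _).isPreconnected hfree₁ x
      (left_mem_segment ℝ _ _))
    (hret _ (isCompact_segment _ _) (convex_segment _ _).isPreconnected hfree₂ x
      (left_mem_segment ℝ _ _))
  exact hno ⟨n + 1, by omega, by omega, G, hG, F x, hGx⟩

theorem not_isPeriodicPt (hF : IsBrouwer F) (hm : 0 < m) : ¬ Function.IsPeriodicPt F m x := by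
  induction m using Nat.strong_induction_on generalizing F x with
  | _ m ih =>
  intro hx
  rcases Nat.lt_or_ge m 3 with hlt | hge
  · interval_cases m
    · exact hF.apply_ne x hx
    · exact hF.hasSymmLogSlope.apply_apply_ne F.continuous hF.apply_ne x hx
  · obtain ⟨i, hi, him, G, hG, y, hy⟩ := hF.exists_isPeriodicPt_lt hge hx
    exact ih i him hG hi hy

end IsBrouwer

/-! ### Franks' lemma -/

/-- An equivalence relation on the plane, each of whose classes can be moved transitively by
homeomorphisms supported in that class. -/
structure IsHomogeneous (r : ℂ → ℂ → Prop) : Prop where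
  equivalence : Equivalence r
  pushes {u v : ℂ} (h : r u v) : Pushes {x | r x u} u v

theorem IsHomogeneous.exists_homeomorph {r : ℂ → ℂ → Prop} (hr : IsHomogeneous r)
    {s t : ℕ → ℂ} {n : ℕ} (hst : ∀ i < n, r (s i) (t i))
    (ht : ∀ i j, i < j → j < n → ¬ r (t i) (t j)) :
    ∃ ψ : ℂ ≃ₜ ℂ, HasSymmLogSlope ψ ∧ (∀ x, r (ψ x) x) ∧ ∀ i < n, ψ (s i) = t i := by
  have hE := hr.equivalence
  induction n with
  | zero => exact ⟨Homeomorph.refl ℂ, hasSymmLogSlope_id, hE.refl, by simp⟩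
  | succ n ih =>
    obtain ⟨ψ, hψ, hψr, hψs⟩ := ih (fun i hi => hst i (by omega)) fun i j hij hj =>
      ht i j hij (by omega)
    have hψt : r (ψ (s n)) (t n) := hE.trans (hψr _) (hst n n.lt_succ_self)
    obtain ⟨φ, hφ, hφt, hφx⟩ := hr.pushes hψt
    have hφr : ∀ x, r (φ x) x := fun x => by
      by_cases hx : r x (ψ (s n))
      · exact hE.trans (mapsTo_of_injective_of_eqOn_compl φ.injective hφx hx) (hE.symm hx)
      · exact (hφx x hx).symm ▸ hE.refl x
    refine ⟨ψ.trans φ, hφ.comp hψ ψ.continuous, fun x => hE.trans (hφr _) (hψr x), fun i hi => ?_⟩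
    rcases Nat.lt_succ_iff_lt_or_eq.1 hi with h | rfl
    · rw [Homeomorph.trans_apply, hψs i h]
      exact hφx _ fun h' => ht i n h n.lt_succ_self (hE.trans h' hψt)
    · exact hφt

namespace IsBrouwer

variable {F : ℂ ≃ₜ ℂ} {r : ℂ → ℂ → Prop} {u : ℕ → ℂ} {m : ℕ}

theorem ne_of_irreducible_chain (hF : IsBrouwer F) (hr : IsHomogeneous r)
    (hfree : ∀ x, ¬ r (F x) x) (hm : 0 < m) (hu : ∀ i < m, r (F (u i)) (u (i + 1)))
    (hirr : ∀ i j, 0 < i → i < j → j ≤ m → ¬ r (u i) (u j)) : u m ≠ u 0 := by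
  intro hum
  obtain ⟨ψ, hψ, hψr, hψu⟩ := hr.exists_homeomorph hu fun i j hij hj =>
    hirr (i + 1) (j + 1) i.succ_pos (by omega) hj
  have hG : IsBrouwer (F.trans ψ) :=
    ⟨hψ.comp hF.hasSymmLogSlope F.continuous, fun x hx =>
      hfree x (hr.equivalence.symm (by simpa only [← Homeomorph.trans_apply, hx] using hψr (F x)))⟩
  exact hG.not_isPeriodicPt hm ((iterate_eq_of_forall_lt hψu).trans hum)

theorem not_rel_of_chain (hF : IsBrouwer F) (hr : IsHomogeneous r) (hfree : ∀ x, ¬ r (F x) x)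
    (hm : 0 < m) (hu : ∀ i < m, r (F (u i)) (u (i + 1))) : ¬ r (u m) (u 0) := by
  intro hum
  have hE := hr.equivalence
  induction m using Nat.strong_induction_on generalizing u with
  | _ m ih =>
  by_cases hred : ∃ i j, 0 < i ∧ i < j ∧ j ≤ m ∧ r (u i) (u j)
  · obtain ⟨i, j, hi, hij, hjm, hr'⟩ := hred
    refine ih (j - i) (by omega) (u := fun l => u (i + l)) (by omega)
      (fun l hl => hu (i + l) (by omega)) ?_
    simpa only [Nat.add_sub_cancel' hij.le, add_zero] using hE.symm hr'
  · push Not at hred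
    let v := Function.update u m (u 0)
    have hv : ∀ i < m, v i = u i := fun i hi => Function.update_of_ne hi.ne _ _
    have hvm : v m = u 0 := Function.update_self ..
    have hvu : ∀ i ≤ m, r (v i) (u i) := fun i hi => by
      rcases hi.lt_or_eq with h | rfl
      · exact hv i h ▸ hE.refl _
      · exact hvm ▸ hE.symm hum
    refine hF.ne_of_irreducible_chain hr hfree hm (u := v) (fun i hi => ?_)
      (fun i j hi hij hj h => ?_) (hvm.trans (hv 0 hm).symm)
    · exact hv i hi ▸ hE.trans (hu i hi) (hE.symm (hvu (i + 1) hi))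
    · exact hred i j hi hij hj
        (hE.trans (hE.symm (hvu i (by omega))) (hE.trans h (hvu j hj)))

end IsBrouwer

/-- The image under `G` of the `r`-class of `x` meets the `r`-class of `y`. -/
def ClassStep (r : ℂ → ℂ → Prop) (G : ℂ → ℂ) (x y : ℂ) : Prop :=
  ∃ a, r x a ∧ r (G a) y

theorem exists_chain_of_transGen_classStep {r : ℂ → ℂ → Prop} (hr : Equivalence r) {G : ℂ → ℂ}
    {x y : ℂ} (h : Relation.TransGen (ClassStep r G) x y) :
    ∃ (m : ℕ) (u : ℕ → ℂ), 0 < m ∧ r x (u 0) ∧ (∀ i < m, r (G (u i)) (u (i + 1))) ∧ u m = y := by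
  induction h using Relation.TransGen.head_induction_on with
  | @single x h =>
    obtain ⟨a, hxa, hay⟩ := h
    refine ⟨1, fun i => Nat.casesOn i a fun _ => y, one_pos, hxa, fun i hi => ?_, rfl⟩
    rwa [Nat.lt_one_iff.1 hi]
  | @head x b h _ ih =>
    obtain ⟨a, hxa, hab⟩ := h
    obtain ⟨m, u, -, hbu, hu, huy⟩ := ih
    refine ⟨m + 1, fun i => Nat.casesOn i a u, m.succ_pos, hxa, fun i hi => ?_, huy⟩
    cases i with
    | zero => exact hr.trans hab hbu
    | succ i => exact hu i (Nat.lt_of_succ_lt_succ hi)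

theorem IsBrouwer.not_transGen_classStep {F : ℂ ≃ₜ ℂ} (hF : IsBrouwer F) {r : ℂ → ℂ → Prop}
    (hr : IsHomogeneous r) (hfree : ∀ x, ¬ r (F x) x) (x : ℂ) :
    ¬ Relation.TransGen (ClassStep r F) x x := by
  intro h
  obtain ⟨m, u, hm, hxu, hu, rfl⟩ := exists_chain_of_transGen_classStep hr.equivalence h
  exact hF.not_rel_of_chain hr hfree hm hu hxu

theorem transGen_classStep_of_iterate {r : ℂ → ℂ → Prop} (hr : Equivalence r) {G : ℂ → ℂ}
    {x y w : ℂ} {n : ℕ} (hn : 0 < n) (hx : r x w) (hy : r (G^[n] w) y) :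
    Relation.TransGen (ClassStep r G) x y := by
  induction n, hn using Nat.le_induction generalizing y with
  | base => exact .single ⟨w, hx, hy⟩
  | succ n _ ih =>
    exact (ih (hr.refl _)).tail ⟨_, hr.refl _, (Function.iterate_succ_apply' G n w) ▸ hy⟩

/-! ### Returns to translated discs -/

section Translates

variable {P : ℂ} {D : Set ℂ}

theorem apply_add_zsmul_of_forall_add {A : Type*} [AddCommGroup A] {G : A → A} {p : A}
    (hG : ∀ w, G (w + p) = G w + p) (w : A) (k : ℤ) : G (w + k • p) = G w + k • p :=
  AddConstMapClass.map_add_zsmul (⟨G, hG⟩ : AddConstMap A A p p) w k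

theorem iterate_add_zsmul_apply {A : Type*} [AddCommGroup A] {G : A → A} {p : A}
    (hG : ∀ w, G (w + p) = G w + p) (k : ℤ) (n : ℕ) (w : A) :
    (fun w => G w + k • p)^[n] w = G^[n] w + (k * n) • p := by
  induction n with
  | zero => simp
  | succ n ih =>
    rw [Function.iterate_succ_apply', Function.iterate_succ_apply', ih,
      apply_add_zsmul_of_forall_add hG, Nat.cast_succ, mul_add_one, add_smul, add_assoc]

/-- The translates of `D` by the multiples of `P` are pairwise disjoint. -/
def HasDisjointTranslates (P : ℂ) (D : Set ℂ) : Prop :=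
  ∀ k : ℤ, ∀ w ∈ D, w + k • P ∈ D → k = 0

theorem hasDisjointTranslates_ball {w₀ : ℂ} {r : ℝ} (hr : 2 * r ≤ ‖P‖) :
    HasDisjointTranslates P (ball w₀ r) := by
  intro k w hw hwk
  by_contra hk
  have hone : (1 : ℝ) ≤ |(k : ℝ)| := by exact_mod_cast Int.one_le_abs hk
  have hdist : dist (w + k • P) w < 2 * r := by
    linarith [dist_triangle_right (w + k • P) w w₀, mem_ball.1 hw, mem_ball.1 hwk]
  rw [dist_eq_norm, add_sub_cancel_left, zsmul_eq_mul, norm_mul, Complex.norm_intCast] at hdist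
  linarith [le_mul_of_one_le_left (norm_nonneg P) hone]

/-- The equivalence relation collapsing each translate of `D` by a multiple of `P` to a point. -/
def TranslateRel (P : ℂ) (D : Set ℂ) (u v : ℂ) : Prop :=
  u = v ∨ ∃ k : ℤ, u - k • P ∈ D ∧ v - k • P ∈ D

theorem TranslateRel.of_mem {u v : ℂ} (hu : u ∈ D) (hv : v ∈ D) : TranslateRel P D u v :=
  Or.inr ⟨0, by simpa using hu, by simpa using hv⟩

theorem TranslateRel.add_zsmul {u v : ℂ} (h : TranslateRel P D u v) (c : ℤ) :
    TranslateRel P D (u + c • P) (v + c • P) := by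
  rcases h with rfl | ⟨k, hu, hv⟩
  · exact Or.inl rfl
  · exact Or.inr ⟨k + c, by rwa [add_smul, add_sub_add_right_eq_sub],
      by rwa [add_smul, add_sub_add_right_eq_sub]⟩

theorem isHomogeneous_translateRel (hD : IsOpen D) (hDc : IsPreconnected D)
    (hDP : HasDisjointTranslates P D) : IsHomogeneous (TranslateRel P D) where
  equivalence.refl _ := Or.inl rfl
  equivalence.symm := by
    rintro u v (rfl | ⟨k, hu, hv⟩)
    · exact Or.inl rfl
    · exact Or.inr ⟨k, hv, hu⟩
  equivalence.trans := by
    rintro u v w (rfl | ⟨k, hu, hv⟩) (rfl | ⟨j, hv', hw⟩)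
    · exact Or.inl rfl
    · exact Or.inr ⟨j, hv', hw⟩
    · exact Or.inr ⟨k, hu, hv⟩
    · have hkj : k - j = 0 := hDP (k - j) _ hv (by rwa [sub_smul, sub_add_sub_cancel])
      obtain rfl := sub_eq_zero.1 hkj
      exact Or.inr ⟨k, hu, hw⟩
  pushes := by
    rintro u v (rfl | ⟨k, hu, hv⟩)
    · exact Pushes.refl _ _
    · have hpre : IsPreconnected {x | x - k • P ∈ D} := by
        simpa only [image_add_right, preimage, sub_eq_add_neg] using
          hDc.image (· + k • P) (continuous_add_const _).continuousOn
      exact (pushes_of_isPreconnected hpre (hD.preimage (continuous_sub_right _)) subset_rfl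
        hu hv).mono fun x hx => Or.inr ⟨k, hx, hu⟩

/-- Some point of `D` is mapped by `G^[n]` into the translate of `D` by `c • P`. -/
def HasReturn (G : ℂ → ℂ) (P : ℂ) (D : Set ℂ) (n : ℕ) (c : ℤ) : Prop :=
  ∃ w ∈ D, G^[n] w - c • P ∈ D

theorem HasReturn.add_zsmul {G : ℂ → ℂ} (hG : ∀ w, G (w + P) = G w + P) {n : ℕ} {c : ℤ}
    (h : HasReturn G P D n c) (k : ℤ) :
    HasReturn (fun w => G w + k • P) P D n (c + k * n) := by
  obtain ⟨w, hw, hGw⟩ := h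
  refine ⟨w, hw, ?_⟩
  rwa [iterate_add_zsmul_apply hG, add_smul, add_sub_add_right_eq_sub]

theorem ClassStep.add_zsmul {G : ℂ → ℂ} (hG : ∀ w, G (w + P) = G w + P) {x y : ℂ}
    (h : ClassStep (TranslateRel P D) G x y) (c : ℤ) :
    ClassStep (TranslateRel P D) G (x + c • P) (y + c • P) := by
  obtain ⟨a, hxa, hay⟩ := h
  exact ⟨a + c • P, hxa.add_zsmul c,
    (apply_add_zsmul_of_forall_add hG a c).symm ▸ hay.add_zsmul c⟩

theorem mul_of_pos_of_forall_add {T : ℤ → Prop} (hadd : ∀ a b, T a → T b → T (a + b))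
    {a k : ℤ} (ha : T a) (hk : 0 < k) : T (k * a) := by
  induction k, hk using Int.leInduction with
  | base => simpa using ha
  | succ k _ ih => simpa only [add_one_mul] using hadd _ _ ih ha

/-- Classes reached from `D` under `G` form an additive set of translates; if it met both
signs it would contain `0`, and Franks' lemma would be violated. -/
theorem IsBrouwer.not_hasReturn_of_nonneg_of_nonpos {G : ℂ ≃ₜ ℂ} (hG : IsBrouwer G)
    (hGP : ∀ w, G (w + P) = G w + P) (hD : IsOpen D) (hDc : IsPreconnected D)
    (hDP : HasDisjointTranslates P D) (hfree : MapsTo G D Dᶜ) {m n : ℕ} (hm : 0 < m) (hn : 0 < n)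
    {a b : ℤ} (ha : 0 ≤ a) (hb : b ≤ 0) (h : HasReturn G P D m a) : ¬ HasReturn G P D n b := by
  intro h'
  have hr := isHomogeneous_translateRel hD hDc hDP
  have hrfree : ∀ x, ¬ TranslateRel P D (G x) x := by
    rintro x (hx | ⟨k, hGx, hx⟩)
    · exact hG.apply_ne x hx
    · refine hfree hx ?_
      rwa [sub_eq_add_neg, ← neg_smul, apply_add_zsmul_of_forall_add hGP, neg_smul,
        ← sub_eq_add_neg]
  obtain ⟨x, hx, -⟩ := id h
  let T : ℤ → Prop := fun c =>
    Relation.TransGen (ClassStep (TranslateRel P D) G) x (x + c • P)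
  have hT0 : ¬ T 0 := fun h0 =>
    hG.not_transGen_classStep hr hrfree x (by simpa only [T, zero_smul, add_zero] using h0)
  have hTadd : ∀ c d, T c → T d → T (c + d) := fun c d hc hd => by
    have := hd.lift (· + c • P) fun _ _ hstep => hstep.add_zsmul hGP c
    exact hc.trans (by rwa [add_comm c d, add_smul, ← add_assoc])
  have hTret : ∀ {k c}, 0 < k → HasReturn G P D k c → T c := by
    rintro k c hk ⟨w, hw, hGw⟩
    exact transGen_classStep_of_iterate hr.equivalence hk (.of_mem hx hw)
      (Or.inr ⟨c, hGw, by rwa [add_sub_cancel_right]⟩)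
  rcases ha.eq_or_lt with rfl | ha
  · exact hT0 (hTret hm h)
  rcases hb.eq_or_lt with rfl | hb
  · exact hT0 (hTret hn h')
  refine hT0 ?_
  have := hTadd _ _ (mul_of_pos_of_forall_add hTadd (hTret hm h) (neg_pos.2 hb))
    (mul_of_pos_of_forall_add hTadd (hTret hn h') ha)
  rwa [show -b * a + a * b = 0 by ring] at this

theorem hasReturn_bound {F : ℂ ≃ₜ ℂ} (hF : HasSymmLogSlope F) (hFP : ∀ w, F (w + P) = F w + P)
    {M : ℝ} (hM : ∀ k : ℤ, M < |(k : ℝ)| → ∀ w, F w ≠ w + k • P) (hD : IsOpen D)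
    (hDc : IsPreconnected D) (hDP : HasDisjointTranslates P D)
    (hfree : ∀ c, ¬ HasReturn F P D 1 c) :
    ∃ C : ℝ, ∀ n c, 0 < n → HasReturn F P D n c → |(c : ℝ)| ≤ C * n := by
  by_cases hex : ∃ n c, 0 < n ∧ HasReturn F P D n c
  swap
  · exact ⟨0, fun n c hn h => (hex ⟨n, c, hn, h⟩).elim⟩
  obtain ⟨n₀, c₀, hn₀, h₀⟩ := hex
  have hsign : ∀ k : ℤ, M < |(k : ℝ)| → ∀ {m n a b}, 0 < m → 0 < n → HasReturn F P D m a →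
      HasReturn F P D n b → 0 ≤ a + k * m → ¬ b + k * n ≤ 0 := by
    intro k hk m n a b hm hn ha hb hpos hneg
    let G := F.trans (Homeomorph.addRight (k • P))
    have hGadd : ∀ w, G w = F w + k • P := fun _ => rfl
    refine IsBrouwer.not_hasReturn_of_nonneg_of_nonpos (G := G)
      ⟨(hasSymmLogSlope_add_const _).comp hF F.continuous, fun w hw => ?_⟩
      (fun w => ?_) hD hDc hDP (fun w hw hGw => ?_) hm hn hpos hneg
      (ha.add_zsmul hFP k) (hb.add_zsmul hFP k)
    · refine hM (-k) (by simpa using hk) w ?_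
      rw [neg_smul, ← sub_eq_add_neg, eq_sub_iff_add_eq]
      exact hw
    · rw [hGadd, hGadd, hFP, add_right_comm]
    · exact hfree (-k) ⟨w, hw, by simpa only [Function.iterate_one, neg_smul, sub_neg_eq_add]⟩
  obtain ⟨K, hK⟩ := exists_nat_gt (max M |(c₀ : ℝ)|)
  have hKM : M < K := (le_max_left _ _).trans_lt hK
  have hKc : |c₀| < K := by exact_mod_cast (le_max_right _ _).trans_lt hK
  have hKn : (K : ℤ) ≤ K * n₀ := by exact_mod_cast Nat.le_mul_of_pos_right K hn₀
  obtain ⟨hKc₁, hKc₂⟩ := abs_lt.1 hKc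
  refine ⟨K, fun n c hn h => ?_⟩
  have hlow : 0 < c + K * n :=
    not_le.1 <| hsign K (by simpa using hKM) hn₀ hn h₀ h (by linarith)
  have hupp : c + -K * n < 0 := not_le.1 fun hpos =>
    hsign (-K) (by simpa using hKM) hn hn₀ h h₀ hpos (by linarith)
  have hcK : |c| ≤ K * n := abs_le.2 ⟨by linarith, by linarith⟩
  exact_mod_cast hcK

end Translates

/-! ### Angular variation and lifts to logarithmic coordinates -/

theorem angVar_of_eq_exp {γ l : ℝ → ℂ} (hl : ContinuousOn l (Icc 0 1))
    (h : ∀ t ∈ Icc (0 : ℝ) 1, γ t = Complex.exp (l t)) :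
    angVar γ = (l 1 - l 0).im / (2 * Real.pi) := by
  have hpolar : ∀ θ : ℝ, ∀ t ∈ Icc (0 : ℝ) 1,
      ‖γ t‖ * Complex.exp (θ * Complex.I) = Complex.exp ((l t).re + θ * Complex.I) :=
    fun θ t ht => by rw [h t ht, Complex.norm_exp, Complex.ofReal_exp, Complex.exp_add]
  have hex : ∃ θ : ℝ → ℝ, ContinuousOn θ (Icc 0 1) ∧
      ∀ t ∈ Icc (0 : ℝ) 1, γ t = (‖γ t‖ : ℂ) * Complex.exp ((θ t : ℂ) * Complex.I) :=
    ⟨fun t => (l t).im, Complex.continuous_im.comp_continuousOn hl, fun t ht => by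
      rw [hpolar _ t ht, Complex.re_add_im, h t ht]⟩
  rw [angVar, dif_pos hex]
  obtain ⟨hθ, hγ⟩ := hex.choose_spec
  generalize hex.choose = θ at hθ hγ
  let g : ℝ → ℂ := fun t => (l t).re + θ t * Complex.I
  have hg : ∀ t ∈ Icc (0 : ℝ) 1, Complex.exp (g t) = Complex.exp (l t) := fun t ht => by
    rw [← hpolar _ t ht, ← hγ t ht, h t ht]
  have hgc : ContinuousOn g (Icc 0 1) := by fun_prop
  have hgl : (fun t : Icc (0 : ℝ) 1 => g t) = fun t : Icc (0 : ℝ) 1 => l t + (g 0 - l 0) := by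
    refine eq_of_exp_eq_exp (x := ⟨0, left_mem_Icc.2 zero_le_one⟩)
      (continuousOn_iff_continuous_domRestrict.1 hgc)
      ((continuousOn_iff_continuous_domRestrict.1 hl).add_const _)
      (fun t => (hg t t.2).trans ?_) (by simp)
    rw [Complex.exp_add, Complex.exp_sub, hg 0 (left_mem_Icc.2 zero_le_one),
      div_self (Complex.exp_ne_zero _), mul_one]
  have him := congrArg Complex.im (congrFun hgl ⟨1, right_mem_Icc.2 zero_le_one⟩)
  simp only [g, Complex.add_im, Complex.sub_im, Complex.ofReal_im, Complex.mul_im,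
    Complex.ofReal_re, Complex.I_im, Complex.I_re, mul_one, mul_zero, zero_add, add_zero] at him
  rw [Complex.sub_im]
  congr 1
  linarith

/-- `f` seen in the moving frame that keeps `z'` at the origin: `u ↦ f (z' + u) - f z'`. -/
def recenter (f : ℂ ≃ₜ ℂ) (z' : ℂ) : ℂ ≃ₜ ℂ :=
  ((Homeomorph.addLeft z').trans f).trans (Homeomorph.addRight (-f z'))

theorem recenter_apply (f : ℂ ≃ₜ ℂ) (z' u : ℂ) : recenter f z' u = f (z' + u) - f z' :=
  (sub_eq_add_neg _ _).symm

theorem recenter_symm_apply (f : ℂ ≃ₜ ℂ) (z' u : ℂ) :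
    (recenter f z').symm u = f.symm (u + f z') - z' := by
  rw [Homeomorph.symm_apply_eq, recenter_apply, add_sub_cancel, Homeomorph.apply_symm_apply,
    add_sub_cancel_right]

namespace HIsotopy

/-- The pointwise inverse isotopy. -/
def symm {X : Type*} [TopologicalSpace X] {f : X ≃ₜ X} (I : HIsotopy f) : HIsotopy f.symm where
  F t := (I.F t).symm
  cont := I.cont_symm
  cont_symm := I.cont
  zero := by rw [I.zero, Homeomorph.refl_symm]
  one := by rw [I.one]

variable {f : ℂ ≃ₜ ℂ}

/-- The isotopy `I` seen in the moving frame that keeps `z'` at the origin. -/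
def recenter (I : HIsotopy f) (z' : ℂ) : HIsotopy (_root_.recenter f z') where
  F t := _root_.recenter (I.F t) z'
  cont := by
    simp only [recenter_apply]
    exact (I.cont.comp (by fun_prop : Continuous fun p : ℝ × ℂ => (p.1, z' + p.2))).sub
      (I.cont.comp (by fun_prop : Continuous fun p : ℝ × ℂ => (p.1, z')))
  cont_symm := by
    simp only [recenter_symm_apply]
    have hz' := I.cont.comp (by fun_prop : Continuous fun p : ℝ × ℂ => (p.1, z'))
    exact (I.cont_symm.comp (continuous_fst.prodMk (continuous_snd.add hz'))).sub continuous_const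
  zero := by
    ext1 u
    simp [recenter_apply, I.zero]
  one := by rw [I.one]

/-- `l` lifts the isotopy `I`, which fixes the origin, through the exponential map. -/
structure IsLogLift (I : HIsotopy f) (l : unitInterval × ℂ → ℂ) : Prop where
  continuous : Continuous l
  exp_apply (t : unitInterval) (w : ℂ) : Complex.exp (l (t, w)) = I.F t (Complex.exp w)
  zero_apply (w : ℂ) : l (0, w) = w

theorem exists_isLogLift (I : HIsotopy f) (h0 : ∀ t, I.F t 0 = 0) : ∃ l, I.IsLogLift l := by
  obtain ⟨l, hl, hexp, hl0⟩ := exists_continuous_log_homotopy (e := fun w : ℂ => w)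
    (H := fun p : unitInterval × ℂ => I.F p.1 (Complex.exp p.2))
    (I.cont.comp (by fun_prop : Continuous fun p : unitInterval × ℂ =>
      ((p.1 : ℝ), Complex.exp p.2)))
    (fun p => fun hp => Complex.exp_ne_zero _ ((I.F p.1).injective (hp.trans (h0 _).symm)))
    continuous_id fun w => by simp [I.zero]
  exact ⟨l, hl, fun t w => hexp (t, w), hl0⟩

namespace IsLogLift

variable {I : HIsotopy f} {l m : unitInterval × ℂ → ℂ}

theorem apply_symm_apply (hl : I.IsLogLift l) (hm : I.symm.IsLogLift m) (t : unitInterval)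
    (w : ℂ) : l (t, m (t, w)) = w := by
  have hlc := hl.continuous
  have hmc := hm.continuous
  refine congrFun (eq_of_exp_eq_exp (g₁ := fun t => l (t, m (t, w))) (g₂ := fun _ => w)
    (x := 0) (by fun_prop) continuous_const (fun t => ?_) ?_) t
  · rw [hl.exp_apply, hm.exp_apply]
    exact (I.F t).apply_symm_apply _
  · rw [hm.zero_apply, hl.zero_apply]

theorem apply_add_two_pi_mul_I (hl : I.IsLogLift l) (t : unitInterval) (w : ℂ) :
    l (t, w + 2 * Real.pi * Complex.I) = l (t, w) + 2 * Real.pi * Complex.I := by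
  have hlc := hl.continuous
  refine congrFun (eq_of_exp_eq_exp (g₁ := fun t => l (t, w + 2 * Real.pi * Complex.I))
    (g₂ := fun t => l (t, w) + 2 * Real.pi * Complex.I) (x := 0) (by fun_prop) (by fun_prop)
    (fun t => ?_) ?_) t
  · rw [Complex.exp_periodic, hl.exp_apply, hl.exp_apply, Complex.exp_periodic]
  · rw [hl.zero_apply, hl.zero_apply]

theorem angVar_exp (hl : I.IsLogLift l) (w : ℂ) :
    angVar (fun t => I.F t (Complex.exp w)) = (l (1, w) - w).im / (2 * Real.pi) := by
  have hlw : Continuous fun t : ℝ => l (projIcc 0 1 zero_le_one t, w) :=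
    hl.continuous.comp (continuous_projIcc.prodMk continuous_const)
  rw [angVar_of_eq_exp hlw.continuousOn
    fun t ht => by rw [hl.exp_apply, projIcc_of_mem _ ht], projIcc_left, projIcc_right]
  exact congrArg (fun c => (l (1, w) - c).im / (2 * Real.pi)) (hl.zero_apply w)

end IsLogLift

/-- `F` lifts `f` to the universal cover of the plane punctured at `z'`, the lift being chosen so
that it follows the isotopy `I`. -/
structure IsAngularLift (I : HIsotopy f) (z' : ℂ) (F : ℂ → ℂ) : Prop where
  exp_apply (w : ℂ) : Complex.exp (F w) = f (z' + Complex.exp w) - f z'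
  apply_add_two_pi_mul_I (w : ℂ) :
    F (w + 2 * Real.pi * Complex.I) = F w + 2 * Real.pi * Complex.I
  enlace_eq (w : ℂ) : Enlace I (z' + Complex.exp w) z' = (F w - w).im / (2 * Real.pi)

theorem exists_isAngularLift (I : HIsotopy f) (z' : ℂ) :
    ∃ F : ℂ ≃ₜ ℂ, HasSymmLogSlope F ∧ I.IsAngularLift z' F := by
  let J := I.recenter z'
  have hJ : ∀ t u, J.F t u = I.F t (z' + u) - I.F t z' := fun t => recenter_apply _ _
  have hJ0 : ∀ t, J.F t 0 = 0 := fun t => by rw [hJ, add_zero, sub_self]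
  obtain ⟨l, hl⟩ := J.exists_isLogLift hJ0
  obtain ⟨m, hm⟩ := J.symm.exists_isLogLift fun t => (J.F t).symm_apply_eq.2 (hJ0 t).symm
  have hml : ∀ t, Function.LeftInverse (fun w => m (t, w)) fun w => l (t, w) :=
    hm.apply_symm_apply (I := J.symm) hl
  have hlc := hl.continuous
  have hmc := hm.continuous
  let F : ℂ ≃ₜ ℂ :=
    { toFun := fun w => l (1, w)
      invFun := fun w => m (1, w)
      left_inv := hml 1
      right_inv := hl.apply_symm_apply hm 1
      continuous_toFun := by fun_prop
      continuous_invFun := by fun_prop }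
  refine ⟨F, hasSymmLogSlope_of_isotopy hlc (fun t => (hml t).injective) hl.zero_apply, {
    exp_apply := fun w => ?_
    apply_add_two_pi_mul_I := hl.apply_add_two_pi_mul_I 1
    enlace_eq := fun w => ?_ }⟩
  · exact (hl.exp_apply 1 w).trans (by rw [hJ, Icc.coe_one, I.one])
  · refine Eq.trans ?_ (hl.angVar_exp w)
    simp only [Enlace, hJ]

end HIsotopy

/-! ### Birkhoff's theorem for bounded functions -/

section Birkhoff

variable {α : Type*} {T : α → α} {g : α → ℝ}

/-- The maximum of the Birkhoff sums of `g` of length at most `n`, the empty one included. -/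
def birkhoffMax (T : α → α) (g : α → ℝ) : ℕ → α → ℝ
  | 0 => fun _ => 0
  | n + 1 => fun x => max (g x + birkhoffMax T g n (T x)) 0

theorem birkhoffMax_nonneg (n : ℕ) (x : α) : 0 ≤ birkhoffMax T g n x := by
  cases n with
  | zero => exact le_rfl
  | succ n => exact le_max_right _ _

theorem birkhoffMax_mono (T : α → α) (g : α → ℝ) : Monotone (birkhoffMax T g) := by
  refine monotone_nat_of_le_succ fun n => ?_
  induction n with
  | zero => exact fun x => birkhoffMax_nonneg 1 x
  | succ n ih => exact fun x => max_le_max_right 0 (add_le_add_right (ih (T x)) _)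

theorem birkhoffSum_le_birkhoffMax (n : ℕ) (x : α) : birkhoffSum T g n x ≤ birkhoffMax T g n x := by
  induction n generalizing x with
  | zero => rfl
  | succ n ih =>
    rw [birkhoffSum_succ']
    exact le_max_of_le_left (add_le_add_right (ih (T x)) _)

theorem exists_birkhoffMax_eq (n : ℕ) (x : α) : ∃ k, birkhoffMax T g n x = birkhoffSum T g k x := by
  induction n generalizing x with
  | zero => exact ⟨0, rfl⟩
  | succ n ih =>
    obtain ⟨k, hk⟩ := ih (T x)
    rcases max_choice (g x + birkhoffMax T g n (T x)) 0 with h | h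
    · exact ⟨k + 1, by rw [birkhoffSum_succ', ← hk]; exact h⟩
    · exact ⟨0, h⟩

/-- The points where the upper limit of the Birkhoff averages exceeds `b`. -/
def upperAverageSet (T : α → α) (g : α → ℝ) (b : ℝ) : Set α :=
  {x | ∃ q : ℚ, b < q ∧ ∃ᶠ n in atTop, (q : ℝ) < birkhoffAverage ℝ T g n x}

theorem frequently_lt_of_tendsto_sub {u v : ℕ → ℝ} (huv : Tendsto (u - v) atTop (𝓝 0)) {c d : ℝ}
    (hcd : c < d) (hv : ∃ᶠ n in atTop, d < v n) : ∃ᶠ n in atTop, c < u n :=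
  (hv.and_eventually (huv.eventually_const_lt (sub_neg.2 hcd))).mono fun n hn => by
    have := hn.2
    simp only [Pi.sub_apply] at this
    linarith [hn.1]

theorem preimage_upperAverageSet (hg : Bornology.IsBounded (range g)) (b : ℝ) :
    T ⁻¹' upperAverageSet T g b = upperAverageSet T g b := by
  have htransfer : ∀ {u v : ℕ → ℝ}, Tendsto (u - v) atTop (𝓝 0) →
      (∃ q : ℚ, b < q ∧ ∃ᶠ n in atTop, (q : ℝ) < v n) →
      ∃ q : ℚ, b < q ∧ ∃ᶠ n in atTop, (q : ℝ) < u n := by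
    rintro u v huv ⟨q, hq, hf⟩
    obtain ⟨p, hbp, hpq⟩ := exists_rat_btwn hq
    exact ⟨p, hbp, frequently_lt_of_tendsto_sub huv hpq hf⟩
  ext x
  have hx := tendsto_birkhoffAverage_apply_sub_birkhoffAverage' ℝ hg T x
  exact ⟨htransfer (by simpa only [neg_sub, neg_zero, Pi.sub_def] using hx.neg), htransfer hx⟩

theorem exists_lt_birkhoffSum_of_mem_upperAverageSet {b : ℝ} {x : α}
    (hx : x ∈ upperAverageSet T g b) : ∃ n : ℕ, n * b < birkhoffSum T g n x := by
  obtain ⟨q, hq, hf⟩ := hx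
  obtain ⟨n, hn, hpos⟩ := (hf.and_eventually (eventually_gt_atTop 0)).exists
  refine ⟨n, ?_⟩
  rw [← lt_inv_mul_iff₀ (Nat.cast_pos.2 hpos)]
  exact hq.trans hn

theorem mem_upperAverageSet_of_frequently_lt {b c : ℝ} (hbc : b < c) {x : α}
    (h : ∃ᶠ n in atTop, c < birkhoffAverage ℝ T g n x) : x ∈ upperAverageSet T g b := by
  obtain ⟨q, hbq, hqc⟩ := exists_rat_btwn hbc
  exact ⟨q, hbq, h.mono fun n hn => hqc.trans hn⟩

theorem abs_birkhoffAverage_le {C : ℝ} (hC : ∀ x, |g x| ≤ C) (n : ℕ) (x : α) :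
    |birkhoffAverage ℝ T g n x| ≤ C := by
  rcases n.eq_zero_or_pos with rfl | hn
  · simpa using (abs_nonneg _).trans (hC x)
  rw [birkhoffAverage, smul_eq_mul, abs_mul, abs_inv, Nat.abs_cast,
    inv_mul_le_iff₀ (Nat.cast_pos.2 hn)]
  calc |birkhoffSum T g n x| ≤ ∑ i ∈ Finset.range n, |g (T^[i] x)| := Finset.abs_sum_le_sum_abs _ _
    _ ≤ n * C := by
      simpa using Finset.sum_le_card_nsmul (Finset.range n) _ C fun i _ => hC (T^[i] x)

variable [MeasurableSpace α] {μ : Measure α}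

theorem measurable_birkhoffMax (hT : Measurable T) (hg : Measurable g) (n : ℕ) :
    Measurable (birkhoffMax T g n) := by
  induction n with
  | zero => exact measurable_const
  | succ n ih => exact (hg.add (ih.comp hT)).max measurable_const

theorem measurable_birkhoffAverage (hT : Measurable T) (hg : Measurable g) (n : ℕ) :
    Measurable (birkhoffAverage ℝ T g n) := by
  have hsum : Measurable (birkhoffSum T g n) :=
    Finset.measurable_fun_sum _ fun i _ => hg.comp (hT.iterate i)
  exact hsum.const_smul ((n : ℝ)⁻¹)

theorem integrable_birkhoffMax (hT : MeasurePreserving T μ μ) (hg : Integrable g μ) (n : ℕ) :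
    Integrable (birkhoffMax T g n) μ := by
  induction n with
  | zero => exact integrable_zero _ _ _
  | succ n ih => exact (hg.add (hT.integrable_comp_of_integrable ih)).pos_part

theorem setIntegral_birkhoffMax_pos_nonneg (hT : MeasurePreserving T μ μ) (hg : Measurable g)
    (hgi : Integrable g μ) (n : ℕ) : 0 ≤ ∫ x in {x | 0 < birkhoffMax T g n x}, g x ∂μ := by
  have hm := measurable_birkhoffMax hT.measurable hg n
  have hE : MeasurableSet {x | 0 < birkhoffMax T g n x} := measurableSet_lt measurable_const hm
  have hi := integrable_birkhoffMax hT hgi n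
  have hiT : Integrable (fun x => birkhoffMax T g n (T x)) μ :=
    hT.integrable_comp_of_integrable hi
  have hinv : ∫ x, birkhoffMax T g n (T x) ∂μ = ∫ x, birkhoffMax T g n x ∂μ := by
    conv_rhs => rw [← hT.map_eq, integral_map hT.aemeasurable hm.aestronglyMeasurable]
  rw [← integral_indicator hE]
  calc 0 = ∫ x, (birkhoffMax T g n x - birkhoffMax T g n (T x)) ∂μ := by
        rw [integral_sub hi hiT, hinv, sub_self]
    _ ≤ _ := integral_mono (hi.sub hiT) (hgi.indicator hE) fun x => ?_
  by_cases hx : x ∈ {x | 0 < birkhoffMax T g n x}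
  · have hle : birkhoffMax T g n x ≤ g x + birkhoffMax T g n (T x) :=
      (le_max_iff.1 (birkhoffMax_mono T g n.le_succ x)).resolve_right (not_le.2 hx)
    rw [indicator_of_mem hx]
    exact sub_le_iff_le_add.2 hle
  · rw [indicator_of_notMem hx]
    exact sub_nonpos.2 ((not_lt.1 hx).trans (birkhoffMax_nonneg n (T x)))

theorem setIntegral_exists_birkhoffSum_pos_nonneg (hT : MeasurePreserving T μ μ)
    (hg : Measurable g) (hgi : Integrable g μ) :
    0 ≤ ∫ x in {x | ∃ n, 0 < birkhoffSum T g n x}, g x ∂μ := by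
  have hunion : {x | ∃ n, 0 < birkhoffSum T g n x} = ⋃ n, {x | 0 < birkhoffMax T g n x} := by
    ext x
    simp only [mem_ofPred_eq, mem_iUnion]
    refine ⟨fun ⟨n, hn⟩ => ⟨n, hn.trans_le (birkhoffSum_le_birkhoffMax n x)⟩, fun ⟨n, hn⟩ => ?_⟩
    obtain ⟨k, hk⟩ := exists_birkhoffMax_eq (T := T) (g := g) n x
    exact ⟨k, hk ▸ hn⟩
  rw [hunion]
  exact ge_of_tendsto' (tendsto_setIntegral_of_monotone
    (fun n => measurableSet_lt measurable_const (measurable_birkhoffMax hT.measurable hg n))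
    (fun m n hmn x hx => lt_of_lt_of_le hx (birkhoffMax_mono T g hmn x)) hgi.integrableOn)
    (setIntegral_birkhoffMax_pos_nonneg hT hg hgi)

theorem mul_measureReal_le_setIntegral_of_exists_lt_birkhoffSum [IsFiniteMeasure μ]
    (hT : MeasurePreserving T μ μ) (hg : Measurable g) (hgi : Integrable g μ) {B : Set α}
    (hB : MeasurableSet B) (hTB : T ⁻¹' B = B) {b : ℝ}
    (hlt : ∀ x ∈ B, ∃ n : ℕ, n * b < birkhoffSum T g n x) :
    b * μ.real B ≤ ∫ x in B, g x ∂μ := by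
  have hTr : MeasurePreserving T (μ.restrict B) (μ.restrict B) := by
    simpa only [hTB] using hT.restrict_preimage hB
  have hpos := setIntegral_exists_birkhoffSum_pos_nonneg hTr (hg.sub_const b)
    (hgi.restrict.sub (integrable_const b))
  have hcover : B ⊆ {x | ∃ n, 0 < birkhoffSum T (fun x => g x - b) n x} := fun x hx => by
    obtain ⟨n, hn⟩ := hlt x hx
    refine ⟨n, ?_⟩
    simpa [birkhoffSum, Finset.sum_sub_distrib] using hn
  rw [Measure.restrict_restrict' hB, inter_eq_right.2 hcover,
    integral_sub hgi.integrableOn (integrable_const b), setIntegral_const, smul_eq_mul] at hpos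
  linarith

theorem measurableSet_upperAverageSet (hT : Measurable T) (hg : Measurable g) (b : ℝ) :
    MeasurableSet (upperAverageSet T g b) := by
  simp only [upperAverageSet, frequently_atTop, ofPred_exists, ofPred_forall, ofPred_and]
  exact .iUnion fun q => (MeasurableSet.const _).inter <| .iInter fun N => .iUnion fun n =>
    (MeasurableSet.const _).inter <|
      measurableSet_lt measurable_const (measurable_birkhoffAverage hT hg n)

theorem measure_upperAverageSet_inter [IsFiniteMeasure μ] (hT : MeasurePreserving T μ μ)
    (hg : Measurable g) (hbd : Bornology.IsBounded (range g)) {a b : ℝ} (hab : a < b) :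
    μ (upperAverageSet T g b ∩ upperAverageSet T (-g) (-a)) = 0 := by
  obtain ⟨C, hC⟩ := hbd.exists_norm_le
  have hbd' : Bornology.IsBounded (range (-g)) :=
    isBounded_iff_forall_norm_le.2 ⟨C, forall_mem_range.2 fun x => by
      simpa using hC _ (mem_range_self x)⟩
  have hgi : Integrable g μ := .of_bound hg.aestronglyMeasurable C
    (ae_of_all _ fun x => hC _ (mem_range_self x))
  have hB := (measurableSet_upperAverageSet hT.measurable hg b).inter
    (measurableSet_upperAverageSet hT.measurable hg.neg (-a))
  have hTB : T ⁻¹' (upperAverageSet T g b ∩ upperAverageSet T (-g) (-a)) =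
      upperAverageSet T g b ∩ upperAverageSet T (-g) (-a) := by
    rw [preimage_inter, preimage_upperAverageSet hbd, preimage_upperAverageSet hbd']
  have hlow := mul_measureReal_le_setIntegral_of_exists_lt_birkhoffSum hT hg hgi hB hTB
    fun x hx => exists_lt_birkhoffSum_of_mem_upperAverageSet hx.1
  have hupp := mul_measureReal_le_setIntegral_of_exists_lt_birkhoffSum hT hg.neg hgi.neg hB hTB
    fun x hx => exists_lt_birkhoffSum_of_mem_upperAverageSet hx.2
  simp only [Pi.neg_apply, integral_neg] at hupp
  rw [← measureReal_eq_zero_iff]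
  refine le_antisymm ?_ measureReal_nonneg
  nlinarith

theorem ae_exists_tendsto_birkhoffAverage [IsFiniteMeasure μ] (hT : MeasurePreserving T μ μ)
    (hg : Measurable g) (hbd : Bornology.IsBounded (range g)) :
    ∀ᵐ x ∂μ, ∃ l, Tendsto (birkhoffAverage ℝ T g · x) atTop (𝓝 l) := by
  have hnull : ∀ᵐ x ∂μ, ∀ a b : ℚ, a < b →
      x ∉ upperAverageSet T g b ∩ upperAverageSet T (-g) (-a) :=
    ae_all_iff.2 fun a => ae_all_iff.2 fun b => ae_all_iff.2 fun hab =>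
      measure_eq_zero_iff_ae_notMem.1
        (measure_upperAverageSet_inter hT hg hbd (Rat.cast_lt.2 hab))
  obtain ⟨C, hC⟩ := hbd.exists_norm_le
  have hA (n : ℕ) (x : α) : |birkhoffAverage ℝ T g n x| ≤ C :=
    abs_birkhoffAverage_le (fun x => hC _ (mem_range_self x)) n x
  filter_upwards [hnull] with x hx
  refine tendsto_of_no_upcrossings (s := range ((↑) : ℚ → ℝ)) Rat.denseRange_cast ?_
    (isBoundedUnder_of ⟨C, fun n => (abs_le.1 (hA n x)).2⟩)
    (isBoundedUnder_of ⟨-C, fun n => (abs_le.1 (hA n x)).1⟩)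
  rintro _ ⟨a, rfl⟩ _ ⟨b, rfl⟩ hab ⟨hlow, hupp⟩
  obtain ⟨a', haa', ha'b⟩ := exists_between (Rat.cast_lt.1 hab)
  obtain ⟨b', ha'b', hb'b⟩ := exists_between ha'b
  refine hx a' b' ha'b' ⟨mem_upperAverageSet_of_frequently_lt (Rat.cast_lt.2 hb'b) hupp,
    mem_upperAverageSet_of_frequently_lt (neg_lt_neg (Rat.cast_lt.2 haa')) <|
      hlow.mono fun n hn => ?_⟩
  rw [birkhoffAverage_neg]
  exact neg_lt_neg hn

end Birkhoff

/-! ### Birkhoff averages along return times -/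

section Returns

variable {α : Type*} {T : α → α} {U : Set α} {x : α}

/-- The first time at which the orbit of `x` enters `U`, time zero included; it is `0` if the
orbit avoids `U`. -/
def entranceTime (T : α → α) (U : Set α) (x : α) : ℕ :=
  sInf {n | T^[n] x ∈ U}

theorem iterate_entranceTime_mem {n : ℕ} (hn : T^[n] x ∈ U) : T^[entranceTime T U x] x ∈ U :=
  Nat.sInf_mem (s := {n | T^[n] x ∈ U}) ⟨n, hn⟩

theorem entranceTime_le {n : ℕ} (hn : T^[n] x ∈ U) : entranceTime T U x ≤ n :=
  Nat.sInf_le hn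

theorem iterate_notMem_of_lt_entranceTime {n : ℕ} (hn : n < entranceTime T U x) :
    T^[n] x ∉ U :=
  Nat.notMem_of_lt_sInf hn

theorem entranceTime_eq {n : ℕ} (hn : T^[n] x ∈ U) (hlt : ∀ j < n, T^[j] x ∉ U) :
    entranceTime T U x = n :=
  (entranceTime_le hn).antisymm <| not_lt.1 fun h => hlt _ h (iterate_entranceTime_mem hn)

/-- The first positive time at which the orbit of `x` enters `U`; it is `1` if there is none. -/
def firstReturn (T : α → α) (U : Set α) (x : α) : ℕ :=
  entranceTime T U (T x) + 1

/-- The average of `h` along the orbit of a point `x` of `U` up to its first return to `U`; it is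
`0` if `x ∉ U` or if the orbit does not return. -/
def returnAverage (T : α → α) (U : Set α) (h : α → ℝ) : α → ℝ :=
  {x ∈ U | T^[firstReturn T U x] x ∈ U}.indicator fun x =>
    birkhoffAverage ℝ T h (firstReturn T U x) x

theorem returnAverage_of_mem (h : α → ℝ) (hx : x ∈ U) (hret : T^[firstReturn T U x] x ∈ U) :
    returnAverage T U h x = birkhoffAverage ℝ T h (firstReturn T U x) x :=
  indicator_of_mem (s := {x ∈ U | T^[firstReturn T U x] x ∈ U}) ⟨hx, hret⟩ _

theorem abs_returnAverage_le {h : α → ℝ} {C : ℝ} (hC : 0 ≤ C)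
    (hle : ∀ x ∈ U, ∀ n : ℕ, 0 < n → T^[n] x ∈ U → |birkhoffSum T h n x| ≤ C * n) (x : α) :
    |returnAverage T U h x| ≤ C := by
  by_cases hx : x ∈ {x ∈ U | T^[firstReturn T U x] x ∈ U}
  · rw [returnAverage_of_mem h hx.1 hx.2, birkhoffAverage, smul_eq_mul, abs_mul, abs_inv,
      Nat.abs_cast, inv_mul_le_iff₀ (Nat.cast_pos.2 (Nat.succ_pos _)), mul_comm]
    exact hle x hx.1 _ (Nat.succ_pos _) hx.2
  · rwa [returnAverage, indicator_of_notMem hx, abs_zero]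

/-- The function taking on a whole orbit segment between two consecutive visits to `U` the value
of `returnAverage` at the first point of the segment. -/
def blockAverage (T : α ≃ α) (U : Set α) (h : α → ℝ) (x : α) : ℝ :=
  returnAverage T U h (T.symm^[entranceTime T.symm U x] x)

theorem symm_iterate_apply_iterate (T : α ≃ α) {m n : ℕ} (hmn : m ≤ n) (x : α) :
    T.symm^[m] (T^[n] x) = T^[n - m] x := by
  obtain ⟨k, rfl⟩ := Nat.exists_eq_add_of_le hmn
  rw [Function.iterate_add_apply, Function.LeftInverse.iterate T.symm_apply_apply m,
    Nat.add_sub_cancel_left]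

theorem blockAverage_iterate (T : α ≃ α) (h : α → ℝ) (hx : x ∈ U) {r : ℕ}
    (hr : r < firstReturn T U x) : blockAverage T U h (T^[r] x) = returnAverage T U h x := by
  have hentry : entranceTime T.symm U (T^[r] x) = r := by
    refine entranceTime_eq ?_ fun j hj => ?_
    · rwa [symm_iterate_apply_iterate T le_rfl, Nat.sub_self]
    · obtain ⟨k, hk⟩ := Nat.exists_eq_add_of_lt (Nat.sub_pos_of_lt hj)
      rw [symm_iterate_apply_iterate T hj.le, hk, zero_add, Function.iterate_succ_apply]
      refine iterate_notMem_of_lt_entranceTime ?_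
      rw [firstReturn] at hr
      lia
  rw [blockAverage, hentry, symm_iterate_apply_iterate T le_rfl, Nat.sub_self,
    Function.iterate_zero_apply]

theorem birkhoffSum_blockAverage_firstReturn (T : α ≃ α) (h : α → ℝ) (hx : x ∈ U)
    (hret : T^[firstReturn T U x] x ∈ U) :
    birkhoffSum T (blockAverage T U h) (firstReturn T U x) x =
      birkhoffSum T h (firstReturn T U x) x := by
  have hne : (firstReturn T U x : ℝ) ≠ 0 := Nat.cast_ne_zero.2 (Nat.succ_ne_zero _)
  rw [birkhoffSum, Finset.sum_congr rfl fun r hr =>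
    blockAverage_iterate T h hx (Finset.mem_range.1 hr), Finset.sum_const, Finset.card_range,
    nsmul_eq_mul, returnAverage_of_mem h hx hret, birkhoffAverage, smul_eq_mul,
    mul_inv_cancel_left₀ hne]

theorem birkhoffSum_blockAverage (T : α ≃ α) (h : α → ℝ) (n : ℕ) (hx : x ∈ U)
    (hn : T^[n] x ∈ U) : birkhoffSum T (blockAverage T U h) n x = birkhoffSum T h n x := by
  induction n using Nat.strong_induction_on generalizing x with
  | _ n ih =>
    rcases n with _ | n
    · rfl
    have hret : T^[firstReturn T U x] x ∈ U := iterate_entranceTime_mem (x := T x) hn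
    have hle : firstReturn T U x ≤ n + 1 := Nat.succ_le_succ (entranceTime_le (x := T x) hn)
    obtain ⟨m, hm⟩ := Nat.exists_eq_add_of_le hle
    have hm' : T^[m] (T^[firstReturn T U x] x) ∈ U := by
      rwa [← Function.iterate_add_apply, add_comm, ← hm]
    rw [hm, birkhoffSum_add, birkhoffSum_add, birkhoffSum_blockAverage_firstReturn T h hx hret,
      ih m (by simp only [firstReturn] at hm; lia) hret hm']

section Measurable

variable [MeasurableSpace α]

theorem measurable_entranceTime (hT : Measurable T) (hU : MeasurableSet U) :
    Measurable (entranceTime T U) := by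
  have hA (n : ℕ) : MeasurableSet (T^[n] ⁻¹' U) := hT.iterate n hU
  refine measurable_of_Iic fun k => ?_
  have hpre : entranceTime T U ⁻¹' Iic k =
      (⋃ n ≤ k, T^[n] ⁻¹' U) ∪ (⋃ n, T^[n] ⁻¹' U)ᶜ := by
    ext x
    simp only [mem_preimage, mem_Iic, mem_union, mem_iUnion, mem_compl_iff, exists_prop]
    refine ⟨fun hk => ?_, ?_⟩
    · by_cases hx : ∃ n, T^[n] x ∈ U
      · exact .inl ⟨_, hk, hx.elim fun n hn => iterate_entranceTime_mem hn⟩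
      · exact .inr hx
    · rintro (⟨n, hnk, hn⟩ | hx)
      · exact (entranceTime_le hn).trans hnk
      · have hempty : {n | T^[n] x ∈ U} = ∅ :=
          eq_empty_iff_forall_notMem.2 fun n hn => hx ⟨n, hn⟩
        rw [entranceTime, hempty, Nat.sInf_empty]
        exact k.zero_le
  rw [hpre]
  exact (MeasurableSet.biUnion (to_countable _) fun n _ => hA n).union
    (MeasurableSet.iUnion hA).compl

theorem measurable_apply_of_countable {ι β : Type*} [Countable ι] [MeasurableSpace ι]
    [MeasurableSingletonClass ι] [MeasurableSpace β] {F : ι → α → β} (hF : ∀ i, Measurable (F i))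
    {τ : α → ι} (hτ : Measurable τ) : Measurable fun x => F (τ x) x :=
  (measurable_from_prod_countable_right (f := fun p : ι × α => F p.1 p.2) hF).comp
    (hτ.prodMk measurable_id)

theorem measurable_returnAverage (hT : Measurable T) (hU : MeasurableSet U) {h : α → ℝ}
    (hh : Measurable h) : Measurable (returnAverage T U h) := by
  have hτ : Measurable (firstReturn T U) :=
    ((measurable_entranceTime hT hU).comp hT).add_const 1
  exact (measurable_apply_of_countable (measurable_birkhoffAverage hT hh) hτ).indicator
    (hU.inter (measurable_apply_of_countable hT.iterate hτ hU))

theorem measurable_blockAverage (T : α ≃ᵐ α) (hU : MeasurableSet U) {h : α → ℝ}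
    (hh : Measurable h) : Measurable (blockAverage T U h) :=
  (measurable_returnAverage T.measurable hU hh).comp <|
    measurable_apply_of_countable T.symm.measurable.iterate
      (measurable_entranceTime T.symm.measurable hU)

/-- Sums growing at most linearly at the return times can be replaced by those of a bounded
function with the same sums at these times. -/
theorem ae_exists_tendsto_birkhoffAverage_returns {μ : Measure α} [IsFiniteMeasure μ]
    (T : α ≃ᵐ α) (hT : MeasurePreserving T μ μ) {h : α → ℝ} (hh : Measurable h)
    (hU : MeasurableSet U) {C : ℝ} (hC : 0 ≤ C)
    (hle : ∀ x ∈ U, ∀ n : ℕ, 0 < n → T^[n] x ∈ U → |birkhoffSum T h n x| ≤ C * n) :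
    ∀ᵐ x ∂μ, x ∈ U →
      ∃ l, Tendsto (birkhoffAverage ℝ T h · x) (atTop ⊓ 𝓟 {n | T^[n] x ∈ U}) (𝓝 l) := by
  have hbd : Bornology.IsBounded (range (blockAverage T U h)) :=
    isBounded_iff_forall_norm_le.2 ⟨C, forall_mem_range.2 fun x =>
      abs_returnAverage_le hC hle _⟩
  filter_upwards [ae_exists_tendsto_birkhoffAverage hT (measurable_blockAverage T hU hh) hbd]
    with x ⟨l, hl⟩ hx
  refine ⟨l, (hl.mono_left inf_le_left).congr' ?_⟩
  filter_upwards [mem_inf_of_right (mem_principal_self _)] with n hn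
  exact congrArg _ (birkhoffSum_blockAverage (T : α ≃ α) h n hx hn)

end Measurable

end Returns

/-! ### Rotation numbers -/

section Rotation

theorem birkhoffSum_of_semiconj {α β : Type*} {φ : α → β} {S : α → α} {T : β → β}
    (hφ : Function.Semiconj φ S T) {g : α → ℝ} {h : β → ℝ} (hg : ∀ x, h (φ x) = g (S x) - g x)
    (n : ℕ) (x : α) : birkhoffSum T h n (φ x) = g (S^[n] x) - g x := by
  induction n generalizing x with
  | zero => simp
  | succ n ih =>
    rw [birkhoffSum_succ', ← hφ, ih, hg, Function.iterate_succ_apply, add_comm,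
      sub_add_sub_cancel]

theorem im_add_zsmul_two_pi_mul_I_sub_div (v w : ℂ) (k : ℤ) :
    (v + k • (2 * Real.pi * Complex.I) - w).im / (2 * Real.pi) =
      k + (v - w).im / (2 * Real.pi) := by
  have him : (k • (2 * Real.pi * Complex.I)).im = k * (2 * Real.pi) := by simp
  rw [add_sub_right_comm, Complex.add_im, him, add_div,
    mul_div_cancel_right₀ _ Real.two_pi_pos.ne', add_comm]

variable {f : ℂ ≃ₜ ℂ} {I : HIsotopy f} {z' z : ℂ}

namespace HIsotopy.IsAngularLift

variable {F : ℂ → ℂ}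

theorem semiconj (hF : I.IsAngularLift z' F) (hz' : f z' = z') :
    Function.Semiconj (fun w => z' + Complex.exp w) F f := fun w => by
  simp only [hF.exp_apply, hz', add_sub_cancel]

theorem birkhoffSum_enlace (hF : I.IsAngularLift z' F) (hz' : f z' = z') (n : ℕ) (w : ℂ) :
    birkhoffSum f (Enlace I · z') n (z' + Complex.exp w) = (F^[n] w - w).im / (2 * Real.pi) := by
  rw [birkhoffSum_of_semiconj (hF.semiconj hz') (g := fun w => w.im / (2 * Real.pi)) fun w => ?_,
    Complex.sub_im, sub_div]
  rw [hF.enlace_eq, Complex.sub_im, sub_div]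

theorem measurable_enlace (hF : I.IsAngularLift z' F) (hFm : Measurable F) :
    Measurable (Enlace I · z') := by
  refine measurable_of_measurable_on_compl_singleton z' ?_
  have hlog : Measurable fun z : ({z'}ᶜ : Set ℂ) => Complex.log (z - z') :=
    Complex.measurable_log.comp (measurable_subtype_coe.sub_const z')
  have heq : (fun z : ({z'}ᶜ : Set ℂ) => Enlace I z z') = fun z : ({z'}ᶜ : Set ℂ) =>
      (F (Complex.log (z - z')) - Complex.log (z - z')).im / (2 * Real.pi) := by
    ext ⟨z, hz⟩
    rw [← hF.enlace_eq, Complex.exp_log (sub_ne_zero.2 hz), add_sub_cancel]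
  change Measurable fun z : ({z'}ᶜ : Set ℂ) => Enlace I z z'
  rw [heq]
  exact (Complex.measurable_im.comp ((hFm.comp hlog).sub hlog)).div_const _

theorem apply_ne_add_zsmul (hF : I.IsAngularLift z' F) (hz' : f z' = z') {M : ℝ}
    (hM : ∀ z ∈ FixPts f, z ≠ z' → |Enlace I z z'| ≤ M) (k : ℤ) (hk : M < |(k : ℝ)|) (w : ℂ) :
    F w ≠ w + k • (2 * Real.pi * Complex.I) := by
  intro hw
  have hfix : f (z' + Complex.exp w) = z' + Complex.exp w := by
    simpa only [hw, Complex.exp_periodic.zsmul k w] using (hF.semiconj hz' w).symm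
  have hle := hM _ hfix (by simp [Complex.exp_ne_zero])
  rw [hF.enlace_eq, hw, im_add_zsmul_two_pi_mul_I_sub_div, sub_self, Complex.zero_im, zero_div,
    add_zero] at hle
  exact hk.not_ge hle

theorem exists_iterate_eq (hF : I.IsAngularLift z' F) (hz' : f z' = z') {n : ℕ} {v w : ℂ}
    (h : f^[n] (z' + Complex.exp w) = z' + Complex.exp v) :
    ∃ c : ℤ, F^[n] w = v + c • (2 * Real.pi * Complex.I) := by
  have hexp : Complex.exp (F^[n] w) = Complex.exp v :=
    add_left_cancel (((hF.semiconj hz').iterate_right n w).trans h)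
  obtain ⟨c, hc⟩ := Complex.exp_eq_exp_iff_exists_int.1 hexp
  exact ⟨c, by rw [hc, zsmul_eq_mul]⟩

theorem exists_abs_birkhoffSum_enlace_le {F : ℂ ≃ₜ ℂ} (hF : I.IsAngularLift z' F)
    (hFs : HasSymmLogSlope F) (hz' : f z' = z') {M : ℝ}
    (hM : ∀ z ∈ FixPts f, z ≠ z' → |Enlace I z z'| ≤ M) {w₀ : ℂ} {r : ℝ} (hr : r ≤ Real.pi)
    (hfree : ∀ w ∈ ball w₀ r, ∀ v ∈ ball w₀ r, f (z' + Complex.exp w) ≠ z' + Complex.exp v) :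
    ∃ C : ℝ, 0 ≤ C ∧ ∀ w ∈ ball w₀ r, ∀ v ∈ ball w₀ r, ∀ n : ℕ, 0 < n →
      f^[n] (z' + Complex.exp w) = z' + Complex.exp v →
      |birkhoffSum f (Enlace I · z') n (z' + Complex.exp w)| ≤ C * n := by
  have hP : ‖2 * Real.pi * Complex.I‖ = 2 * Real.pi := by simp [Real.pi_pos.le]
  have hnoret : ∀ c, ¬ HasReturn F (2 * Real.pi * Complex.I) (ball w₀ r) 1 c := by
    rintro c ⟨w, hw, hFw⟩
    refine hfree w hw _ hFw ?_
    rw [Function.iterate_one, Complex.exp_periodic.sub_zsmul_eq]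
    exact (hF.semiconj hz' w).symm
  obtain ⟨C, hC⟩ := hasReturn_bound hFs hF.apply_add_two_pi_mul_I (hF.apply_ne_add_zsmul hz' hM)
    isOpen_ball (convex_ball w₀ r).isPreconnected (hasDisjointTranslates_ball (by linarith)) hnoret
  refine ⟨|C| + 1, by positivity, fun w hw v hv n hn hret => ?_⟩
  obtain ⟨c, hc⟩ := hF.exists_iterate_eq hz' hret
  have hn' : (1 : ℝ) ≤ n := Nat.one_le_cast.2 hn
  have hcn : |(c : ℝ)| ≤ C * n := hC n c hn ⟨w, hw, by rwa [hc, add_sub_cancel_right]⟩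
  have hvw : |(v - w).im / (2 * Real.pi)| ≤ 1 := by
    rw [abs_div, abs_of_pos Real.two_pi_pos, div_le_one Real.two_pi_pos]
    calc |(v - w).im| ≤ dist v w := (Complex.abs_im_le_norm _).trans_eq (dist_eq_norm v w).symm
      _ ≤ dist v w₀ + dist w w₀ := dist_triangle_right _ _ _
      _ ≤ 2 * Real.pi := by linarith [mem_ball.1 hv, mem_ball.1 hw]
  rw [hF.birkhoffSum_enlace hz', hc, im_add_zsmul_two_pi_mul_I_sub_div]
  calc |c + (v - w).im / (2 * Real.pi)| ≤ C * n + 1 := (abs_add_le _ _).trans (add_le_add hcn hvw)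
    _ ≤ |C| * n + n := add_le_add (by gcongr; exact le_abs_self C) hn'
    _ = (|C| + 1) * n := by ring

end HIsotopy.IsAngularLift

theorem hasRot_of_tendsto_birkhoffAverage {U : Set ℂ} (hU : U ∈ 𝓝 z) {l : ℝ}
    (hl : Tendsto (birkhoffAverage ℝ f (Enlace I · z') · z)
      (atTop ⊓ 𝓟 {n | f^[n] z ∈ U}) (𝓝 l)) : HasRot I z' z l := by
  intro n hn hrec
  have hlim := hl.comp (tendsto_inf.2 ⟨hn.tendsto_atTop, tendsto_principal.2 (hrec hU)⟩)
  refine hlim.congr fun k => ?_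
  rw [Function.comp_apply, birkhoffAverage, smul_eq_mul, inv_mul_eq_div, birkhoffSum]

theorem hasRot_of_isFixedPt (hz : f z = z) : HasRot I z' z (Enlace I z z') := by
  refine hasRot_of_tendsto_birkhoffAverage univ_mem
    ((tendsto_const_nhds.congr' ?_).mono_left inf_le_left)
  filter_upwards [eventually_ne_atTop 0] with n hn
  exact (Function.IsFixedPt.birkhoffAverage_eq ℝ (f := f) hz (Enlace I · z')
    (Nat.cast_ne_zero.2 hn)).symm

theorem exists_ball_forall_apply_ne {X Y : Type*} [PseudoMetricSpace X] [TopologicalSpace Y]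
    [T2Space Y] {φ ψ : X → Y} (hφ : Continuous φ) (hψ : Continuous ψ) {x₀ : X}
    (h : φ x₀ ≠ ψ x₀) {R : ℝ} (hR : 0 < R) :
    ∃ r, 0 < r ∧ r ≤ R ∧ ∀ x ∈ ball x₀ r, ∀ y ∈ ball x₀ r, φ x ≠ ψ y := by
  have hev : ∀ᶠ p : X × X in 𝓝 x₀ ×ˢ 𝓝 x₀, φ p.1 ≠ ψ p.2 := by
    rw [← nhds_prod_eq]
    exact (isOpen_ne_fun (hφ.comp continuous_fst) (hψ.comp continuous_snd)).mem_nhds h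
  obtain ⟨t, ht, hne⟩ := (eventually_prod_self_iff (r := fun x y => φ x ≠ ψ y)).1 hev
  obtain ⟨ε, hε, hεt⟩ := Metric.mem_nhds_iff.1 ht
  have hsub : ball x₀ (min ε R) ⊆ t := (ball_subset_ball (min_le_left _ _)).trans hεt
  exact ⟨min ε R, lt_min hε hR, min_le_right _ _,
    fun x hx y hy => hne x (hsub hx) y (hsub hy)⟩

theorem exists_mem_nhds_ae_hasRot {M : ℝ}
    (hM : ∀ z ∈ FixPts f, z ≠ z' → |Enlace I z z'| ≤ M) {μ : Measure ℂ} [IsFiniteMeasure μ]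
    (hinv : Measure.map f μ = μ) (hz' : f z' = z') {z₀ : ℂ} (hne : z₀ ≠ z') (hz₀ : f z₀ ≠ z₀) :
    ∃ U ∈ 𝓝 z₀, ∀ᵐ z ∂μ, z ∈ U → ∃ ρ, HasRot I z' z ρ := by
  obtain ⟨F, hFs, hF⟩ := I.exists_isAngularLift z'
  let φ : ℂ → ℂ := fun w => z' + Complex.exp w
  have hφ : Continuous φ := by fun_prop
  have hφo : IsOpenMap φ := (Homeomorph.addLeft z').isOpenMap.comp Complex.isOpenMap_exp
  obtain ⟨w₀, rfl⟩ : ∃ w₀, φ w₀ = z₀ := ⟨Complex.log (z₀ - z'), by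
    simp only [φ, Complex.exp_log (sub_ne_zero.2 hne), add_sub_cancel]⟩
  obtain ⟨r, hr, hrπ, hfree⟩ :=
    exists_ball_forall_apply_ne (f.continuous.comp hφ) hφ hz₀ Real.pi_pos
  obtain ⟨C, hC, hle⟩ := hF.exists_abs_birkhoffSum_enlace_le hFs hz' hM hrπ hfree
  have hUo : IsOpen (φ '' ball w₀ r) := hφo _ isOpen_ball
  refine ⟨_, hUo.mem_nhds (mem_image_of_mem φ (mem_ball_self hr)), ?_⟩
  have hlim := ae_exists_tendsto_birkhoffAverage_returns f.toMeasurableEquiv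
    ⟨f.continuous.measurable, hinv⟩ (hF.measurable_enlace F.continuous.measurable)
    hUo.measurableSet hC (by
      rintro _ ⟨w, hw, rfl⟩ n hn ⟨v, hv, hret⟩
      exact hle w hw v hv n hn hret.symm)
  filter_upwards [hlim] with z hz hzU
  obtain ⟨l, hl⟩ := hz hzU
  exact ⟨l, hasRot_of_tendsto_birkhoffAverage (hUo.mem_nhds hzU) hl⟩

theorem stmt7_rotation_number_ae_defined_general
    (f : ℂ ≃ₜ ℂ) (I : HIsotopy f) (z' : ℂ) (hz' : z' ∈ FixPts ⇑f)
    (hM : ∃ M : ℝ, ∀ z ∈ FixPts ⇑f, z ≠ z' → |Enlace I z z'| ≤ M)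
    (μ : Measure ℂ) [IsFiniteMeasure μ] (hinv : Measure.map (⇑f) μ = μ) :
    ∀ᵐ z ∂μ, z ∈ RecPlus f \ {z'} → ∃ ρ : ℝ, HasRot I z' z ρ := by
  obtain ⟨M, hM⟩ := hM
  refine measure_null_of_locally_null _ fun z₀ hz₀ => ?_
  have ⟨hmem, hno⟩ : z₀ ∈ RecPlus f \ {z'} ∧ ¬ ∃ ρ, HasRot I z' z₀ ρ := Classical.not_imp.1 hz₀
  have hmoved : f z₀ ≠ z₀ := fun hfix => hno ⟨_, hasRot_of_isFixedPt hfix⟩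
  obtain ⟨U, hU, hae⟩ := exists_mem_nhds_ae_hasRot hM hinv hz' hmem.2 hmoved
  refine ⟨_, inter_mem_nhdsWithin _ hU, measure_mono_null ?_ hae⟩
  rintro z ⟨hz, hzU⟩ hrot
  exact hz fun _ => hrot hzU

end Rotation

theorem stmt7_rotation_number_ae_defined
    (f : ℂ ≃ₜ ℂ) (I : HIsotopy f) (hP1 : P1 I) (hP2 : P2 I)
    (hnc : ¬ IsCompact (FixPts ⇑f)) (hA : Adapted I)
    (μ : Measure ℂ) [IsFiniteMeasure μ] (hinv : Measure.map (⇑f) μ = μ)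
    (z' : ℂ) (hz' : z' ∈ FixPts ⇑f) :
    ∀ᵐ zz ∂μ, zz ∈ RecPlus f \ {z'} → ∃ ρ : ℝ, HasRot I z' zz ρ :=
  stmt7_rotation_number_ae_defined_general f I z' hz'
    (hP1.imp fun _ hM z hz hne => hM z hz z' hz' hne) μ hinv

end
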